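/- arXiv:1609.05826 — 8 statements merged into one kernel-verified Lean document; each statement's English description precedes it below -/
import Mathlib

section
/- Let K be a number field of degree 6 over ℚ that is a CM field, i.e., K is totally complex (no embedding K → ℂ has image contained in ℝ) and contains a totally real subfield K₊ with [K₊:ℚ] = 3. Let μ be an algebraic integer of K such that K = ℚ(μ) and μ² ∈ K₊ (equivalently, φ(μ²) is real for every embedding φ : K → ℂ). Then B := −(1/2)·Tr_{K/ℚ}(μ²) is a rational integer and B ≥ 2. -/
open Module

/-- Lemma `lem:Bnot1`. Let `K` be a sextic CM field: a number field of
degree 6 over `ℚ`, totally complex, containing a totally real subfield `K₊` of degree 3.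
Let `μ` be an algebraic integer of `K` with `K = ℚ(μ)` and `μ² ∈ K₊`. Then
`B = -(1/2)·Tr_{K/ℚ}(μ²)` is a rational integer with `B ≥ 2`. -/
theorem stmt_0
    (K : Type*) [Field K] [NumberField K]
    (hK6 : finrank ℚ K = 6)
    (hKcomplex : ∀ φ : K →+* ℂ, ∃ x : K, (φ x).im ≠ 0)
    (Kp : IntermediateField ℚ K)
    (hKp3 : finrank ℚ Kp = 3)
    (hKpreal : ∀ φ : K →+* ℂ, ∀ x ∈ Kp, (φ x).im = 0)
    (μ : K)
    (hμint : IsIntegral ℤ μ)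
    (hgen : IntermediateField.adjoin ℚ {μ} = ⊤)
    (hμ2 : μ ^ 2 ∈ Kp) :
    ∃ B : ℤ, (B : ℚ) = -(1/2) * Algebra.trace ℚ K (μ ^ 2) ∧ 2 ≤ B := by
  have hfr : finrank Kp K = 2 := by
    have h := finrank_mul_finrank ℚ Kp K
    rw [hKp3, hK6] at h
    omega
  have hμ0 : μ ≠ 0 := by
    rintro rfl
    have h1 : finrank ℚ (⊤ : IntermediateField ℚ K) = 1 := by
      rw [← hgen, IntermediateField.adjoin_zero]
      exact IntermediateField.finrank_bot
    rw [IntermediateField.finrank_top'] at h1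
    omega
  -- every embedding sends `μ ^ 2` to a negative real
  have hneg : ∀ φ : K →ₐ[ℚ] ℂ, ∃ r : ℝ, 0 < r ∧ φ (-μ ^ 2) = (r : ℂ) := by
    intro φ
    have him : (φ (μ ^ 2)).im = 0 := hKpreal φ.toRingHom _ hμ2
    have hnr : (φ μ).im ≠ 0 := by
      intro h0
      obtain ⟨x, hx⟩ := hKcomplex φ.toRingHom
      apply hx
      let R : IntermediateField ℚ ℂ := (IsScalarTower.toAlgHom ℚ ℝ ℂ).fieldRange
      have hle : IntermediateField.adjoin ℚ {μ} ≤ R.comap φ := by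
        rw [IntermediateField.adjoin_simple_le_iff]
        refine ⟨(φ μ).re, ?_⟩
        apply Complex.ext <;> simp [h0]
      rw [hgen] at hle
      obtain ⟨r, hr⟩ := hle (IntermediateField.mem_top (x := x))
      have hr' : (r : ℂ) = φ x := hr
      change (φ x).im = 0
      rw [← hr']
      exact Complex.ofReal_im r
    rw [map_pow, pow_two, Complex.mul_im] at him
    have hre : (φ μ).re = 0 := by
      have : (φ μ).re * (φ μ).im = 0 := by linarith
      rcases mul_eq_zero.1 this with h | h
      · exact h
      · exact absurd h hnr
    refine ⟨(φ μ).im ^ 2, by positivity, ?_⟩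
    rw [map_neg, map_pow]
    apply Complex.ext
    · rw [Complex.ofReal_re, Complex.neg_re, pow_two, Complex.mul_re, hre]; ring
    · rw [Complex.ofReal_im, Complex.neg_im, pow_two, Complex.mul_im, hre]; ring
  choose r hrpos hr using hneg
  -- the integer
  let β : Kp := ⟨μ ^ 2, hμ2⟩
  have hβint : IsIntegral ℤ β := by
    have : IsIntegral ℤ (algebraMap Kp K β) := hμint.pow 2
    exact (isIntegral_algebraMap_iff (algebraMap Kp K).injective).1 this
  obtain ⟨b, hb⟩ := IsIntegrallyClosed.isIntegral_iff.1 (Algebra.isIntegral_trace (L := ℚ) hβint)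
  have htr : Algebra.trace ℚ K (μ ^ 2) = 2 * b := by
    have h1 : μ ^ 2 = algebraMap Kp K β := rfl
    rw [h1, ← Algebra.trace_trace (S := Kp), Algebra.trace_algebraMap, hfr, map_nsmul, ← hb]
    simp
  refine ⟨-b, by rw [htr]; push_cast; ring, ?_⟩
  -- the norm
  have hint : IsIntegral ℤ (-μ ^ 2) := (hμint.pow 2).neg
  obtain ⟨n, hn⟩ := IsIntegrallyClosed.isIntegral_iff.1 (Algebra.isIntegral_norm ℚ hint)
  have hn0 : n ≠ 0 := by
    rintro rfl
    have : Algebra.norm ℚ (-μ ^ 2) = 0 := by rw [← hn]; simp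
    rw [Algebra.norm_eq_zero_iff] at this
    exact hμ0 (by simpa using this)
  have hprod : (n : ℝ) = ∏ φ : K →ₐ[ℚ] ℂ, r φ := by
    have h := Algebra.norm_eq_prod_embeddings ℚ ℂ (-μ ^ 2)
    rw [← hn, Finset.prod_congr rfl (fun φ _ => hr φ)] at h
    apply Complex.ofReal_injective
    push_cast
    simpa using h
  have hsum : (-2 * b : ℝ) = ∑ φ : K →ₐ[ℚ] ℂ, r φ := by
    have h := trace_eq_sum_embeddings (K := ℚ) ℂ (x := -μ ^ 2)
    rw [map_neg, htr, Finset.sum_congr rfl (fun φ _ => hr φ)] at h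
    apply Complex.ofReal_injective
    push_cast
    simpa using h
  have hnpos : (0 : ℝ) < n := by
    rw [hprod]; exact Finset.prod_pos fun φ _ => hrpos φ
  have hn1 : (1 : ℝ) ≤ n := by
    have : 0 < n := by exact_mod_cast hnpos
    exact_mod_cast this
  have hlog : 0 ≤ ∑ φ : K →ₐ[ℚ] ℂ, Real.log (r φ) := by
    rw [← Real.log_prod (fun φ _ => (hrpos φ).ne'), ← hprod]
    exact Real.log_nonneg hn1
  have hle : ∑ φ : K →ₐ[ℚ] ℂ, Real.log (r φ) ≤ ∑ φ : K →ₐ[ℚ] ℂ, (r φ - 1) :=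
    Finset.sum_le_sum fun φ _ => Real.log_le_sub_one_of_pos (hrpos φ)
  rw [Finset.sum_sub_distrib, ← hsum, Finset.sum_const, Finset.card_univ, AlgHom.card, hK6] at hle
  have h3 : (2 : ℝ) ≤ -(b : ℝ) := by
    norm_num at hle
    linarith
  exact_mod_cast h3
end

section
/- Let K be a sextic CM field (a number field of degree 6 over ℚ, totally complex, containing a totally real subfield K₊ with [K₊:ℚ] = 3). Assume K contains no imaginary quadratic subfield, i.e., no subfield L ⊆ K with [L:ℚ] = 2. Let 𝓞 be an order in K. Then there exists μ ∈ 𝓞 such that K = ℚ(μ), μ² is totally negative (φ(μ²) is a negative real for every embedding φ : K → ℂ), and 0 < −(1/2)·Tr_{K/ℚ}(μ²) ≤ (6/π)^{2/3}·|Δ(𝓞)|^{1/3}. -/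
open Module

open MeasureTheory in
lemma vol_body (r : ℝ) (hr : 0 < r) :
    volume {v : (Fin 3 ⊕ Fin 3) → ℝ | (∀ j, |v (Sum.inl j)| < 1/2) ∧ ∑ j, (v (Sum.inr j))^2 < r^2}
      = ENNReal.ofReal (Real.pi * 4 / 3 * r^3) := by
  have h1 : volume {v : Fin 3 → ℝ | ∀ j, |v j| < 1/2} = 1 := by
    have : {v : Fin 3 → ℝ | ∀ j, |v j| < 1/2} = Set.univ.pi (fun _ => Set.Ioo (-(1/2) : ℝ) (1/2)) := by
      ext v; simp [abs_lt]
    rw [this, Real.volume_pi_Ioo]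
    norm_num
  have h2 : volume {v : Fin 3 → ℝ | ∑ j, (v j)^2 < r^2} = ENNReal.ofReal (Real.pi * 4 / 3 * r^3) := by
    have : {v : Fin 3 → ℝ | ∑ j, (v j)^2 < r^2}
        = (WithLp.toLp 2) ⁻¹' (Metric.ball (0 : EuclideanSpace ℝ (Fin 3)) r) := by
      ext v
      simp only [Set.mem_setOf_eq, Set.mem_preimage, Metric.mem_ball, dist_zero_right,
        EuclideanSpace.norm_eq, Real.norm_eq_abs, sq_abs]
      rw [Real.sqrt_lt' hr]
    rw [this, (PiLp.volume_preserving_toLp (Fin 3)).measure_preimage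
      measurableSet_ball.nullMeasurableSet, EuclideanSpace.volume_ball_fin_three,
      ← ENNReal.ofReal_pow hr.le, ← ENNReal.ofReal_mul (by positivity)]
    congr 1; ring
  have h3 := (volume_measurePreserving_sumPiEquivProdPi (fun _ : Fin 3 ⊕ Fin 3 => ℝ)).measure_preimage_equiv
    ({v : Fin 3 → ℝ | ∀ j, |v j| < 1/2} ×ˢ {v : Fin 3 → ℝ | ∑ j, (v j)^2 < r^2})
  rw [Measure.volume_eq_prod, Measure.prod_prod, h1, h2, one_mul] at h3
  rw [← h3]
  rfl

open MeasureTheory in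
lemma minkowski_body (A : Matrix (Fin 3 ⊕ Fin 3) (Fin 3 ⊕ Fin 3) ℝ) (hA : A.det ≠ 0) (r : ℝ)
    (hr : 0 < r) (h : 48 * |A.det| < Real.pi * r^3) :
    ∃ c : (Fin 3 ⊕ Fin 3) → ℤ, c ≠ 0 ∧
      (∀ j, |(A.mulVec (fun i => (c i : ℝ))) (Sum.inl j)| < 1/2) ∧
      ∑ j, ((A.mulVec (fun i => (c i : ℝ))) (Sum.inr j))^2 < r^2 := by
  classical
  set T := {v : (Fin 3 ⊕ Fin 3) → ℝ |
    (∀ j, |v (Sum.inl j)| < 1/2) ∧ ∑ j, (v (Sum.inr j))^2 < r^2} with hT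
  have hTs : ∀ x ∈ T, -x ∈ T := by
    intro x hx; simpa [hT] using hx
  have hTc : Convex ℝ T := by
    have : T = (⋂ j, (LinearMap.proj (Sum.inl j) : ((Fin 3 ⊕ Fin 3) → ℝ) →ₗ[ℝ] ℝ) ⁻¹' (Set.Ioo (-(1/2)) (1/2)))
        ∩ ((WithLp.linearEquiv 2 ℝ (Fin 3 → ℝ)).symm.toLinearMap ∘ₗ LinearMap.funLeft ℝ ℝ Sum.inr) ⁻¹'
          (Metric.ball (0 : EuclideanSpace ℝ (Fin 3)) r) := by
      ext v
      simp [hT, abs_lt, EuclideanSpace.norm_eq, Real.sqrt_lt' hr, LinearMap.funLeft]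
    rw [this]
    exact (convex_iInter fun j => (convex_Ioo _ _).linear_preimage _).inter
      ((convex_ball _ _).linear_preimage _)
  let f := Matrix.toLin' A
  have hf : LinearMap.det f = A.det := LinearMap.det_toLin' A
  have hv : volume (f ⁻¹' T) = ENNReal.ofReal (|A.det|⁻¹ * (Real.pi * 4 / 3 * r^3)) := by
    rw [Measure.addHaar_preimage_linearMap volume (by rw [hf]; exact hA), hf, vol_body r hr,
      ← ENNReal.ofReal_mul (by positivity), abs_inv]
  have fund := ZSpan.isAddFundamentalDomain' (Pi.basisFun ℝ (Fin 3 ⊕ Fin 3)) volume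
  have hcard : finrank ℝ ((Fin 3 ⊕ Fin 3) → ℝ) = 6 := by simp
  haveI : Countable (Submodule.span ℤ (Set.range (Pi.basisFun ℝ (Fin 3 ⊕ Fin 3)))).toAddSubgroup :=
    inferInstanceAs (Countable (Submodule.span ℤ (Set.range (Pi.basisFun ℝ (Fin 3 ⊕ Fin 3)))))
  obtain ⟨x, hx0, hx⟩ := exists_ne_zero_mem_lattice_of_measure_mul_two_pow_lt_measure (s := f ⁻¹' T) fund
    (fun x hx => by
      have := hTs _ hx
      simpa using this) (hTc.linear_preimage f) (by
      rw [hv, hcard, ZSpan.volume_fundamentalDomain]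
      have hd : 0 < |A.det| := abs_pos.mpr hA
      have e1 : (Matrix.of ⇑(Pi.basisFun ℝ (Fin 3 ⊕ Fin 3))).det = 1 := by
        rw [← Matrix.det_one (R := ℝ) (n := Fin 3 ⊕ Fin 3)]
        congr 1
        ext i j
        simp [Pi.basisFun_apply, Matrix.one_apply, Pi.single_apply, eq_comm]
      rw [e1, abs_one, ENNReal.ofReal_one, one_mul]
      rw [show (2 : ENNReal)^6 = ENNReal.ofReal 64 by norm_num]
      rw [ENNReal.ofReal_lt_ofReal_iff (by positivity), ← div_eq_inv_mul, lt_div_iff₀ hd]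
      linarith)
  have hmem : ∀ i, ∃ c : ℤ, (c : ℝ) = (x : (Fin 3 ⊕ Fin 3) → ℝ) i := by
    have := (Basis.mem_span_iff_repr_mem ℤ (Pi.basisFun ℝ (Fin 3 ⊕ Fin 3)) (x : (Fin 3 ⊕ Fin 3) → ℝ)).1 x.2
    intro i
    simpa using this i
  choose c hc using hmem
  have hcx : (fun i => (c i : ℝ)) = (x : (Fin 3 ⊕ Fin 3) → ℝ) := funext hc
  refine ⟨c, ?_, ?_⟩
  · rintro rfl
    apply hx0
    ext i
    simp [← hc]
  · rw [hcx]
    exact hx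


lemma exists_embs (K : Type*) [Field K] [NumberField K]
    (hK6 : finrank ℚ K = 6)
    (hKcomplex : ∀ φ : K →+* ℂ, ∃ x : K, (φ x).im ≠ 0) :
    ∃ ψ : Fin 3 → (K →+* ℂ), (∀ x, ((Algebra.trace ℚ K x : ℚ) : ℝ) = ∑ j, 2 * (ψ j x).re) ∧
      ∀ φ : K →+* ℂ, ∃ j, φ = ψ j ∨ φ = NumberField.ComplexEmbedding.conjugate (ψ j) := by
  classical
  have hnr : ∀ φ : K →+* ℂ, NumberField.ComplexEmbedding.conjugate φ ≠ φ := by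
    intro φ h
    obtain ⟨x, hx⟩ := hKcomplex φ
    apply hx
    have := congrArg (fun f : K →+* ℂ => f x) h
    simp only [NumberField.ComplexEmbedding.conjugate_coe_eq] at this
    exact Complex.conj_eq_iff_im.1 this
  have hfib : ∀ w : NumberField.InfinitePlace K,
      (Finset.univ.filter (fun φ : K →+* ℂ => NumberField.InfinitePlace.mk φ = w)) =
        {w.embedding, NumberField.ComplexEmbedding.conjugate w.embedding} := by
    intro w
    ext φ
    simp only [Finset.mem_filter, Finset.mem_univ, true_and, Finset.mem_insert, Finset.mem_singleton]
    conv_lhs => rw [← NumberField.InfinitePlace.mk_embedding w, eq_comm, NumberField.InfinitePlace.mk_eq_iff]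
    simp [eq_comm]
  have hsum : ∀ g : (K →+* ℂ) → ℂ, ∑ φ, g φ = ∑ w : NumberField.InfinitePlace K,
      (g w.embedding + g (NumberField.ComplexEmbedding.conjugate w.embedding)) := by
    intro g
    rw [← Finset.sum_fiberwise Finset.univ NumberField.InfinitePlace.mk]
    refine Finset.sum_congr rfl fun w _ => ?_
    rw [hfib, Finset.sum_pair (hnr _).symm]
  have hcard : Fintype.card (NumberField.InfinitePlace K) = 3 := by
    have h1 := hsum (fun _ => 1)
    have h2 : Fintype.card (K →+* ℂ) = 6 := by rw [NumberField.Embeddings.card, hK6]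
    simp [h2] at h1
    have h3 : (6 : ℂ) = ((Fintype.card (NumberField.InfinitePlace K) * 2 : ℕ) : ℂ) := by
      rw [h1]; push_cast; ring
    have h4 : 6 = Fintype.card (NumberField.InfinitePlace K) * 2 := by exact_mod_cast h3
    omega
  let e := (Fintype.equivFinOfCardEq hcard).symm
  refine ⟨fun j => (e j).embedding, fun x => ?_, fun φ => ?_⟩
  · have h1 : ((Algebra.trace ℚ K x : ℚ) : ℂ) = ∑ φ : K →+* ℂ, φ x := by
      have := trace_eq_sum_embeddings (K := ℚ) (L := K) (E := ℂ) (x := x)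
      rw [← Fintype.sum_equiv (RingHom.equivRatAlgHom K ℂ) (fun f => f x)
        (fun φ => φ x) fun _ => by simp [RingHom.equivRatAlgHom_apply]] at this
      simpa using this
    rw [hsum, ← Equiv.sum_comp e] at h1
    have h2 := congrArg Complex.re h1
    simp only [Complex.ratCast_re, Complex.re_sum, Complex.add_re,
      NumberField.ComplexEmbedding.conjugate_coe_eq, Complex.conj_re] at h2
    rw [h2]
    exact Finset.sum_congr rfl fun j _ => by ring
  · have : φ ∈ (Finset.univ.filter (fun φ' : K →+* ℂ =>
      NumberField.InfinitePlace.mk φ' = NumberField.InfinitePlace.mk φ)) := by simp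
    rw [hfib] at this
    refine ⟨e.symm (NumberField.InfinitePlace.mk φ), ?_⟩
    simpa using this

lemma re_zero (K : Type*) [Field K] [NumberField K]
    (hK6 : finrank ℚ K = 6)
    (hKcomplex : ∀ φ : K →+* ℂ, ∃ x : K, (φ x).im ≠ 0)
    (Kp : IntermediateField ℚ K)
    (hKp3 : finrank ℚ Kp = 3)
    (hKpreal : ∀ φ : K →+* ℂ, ∀ x ∈ Kp, (φ x).im = 0)
    (μ : K) (hμ : IsIntegral ℤ μ) (h : ∀ φ : K →+* ℂ, |(φ μ).re| < 1/2) (φ : K →+* ℂ) :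
    (φ μ).re = 0 := by
  classical
  have h2 : finrank Kp K = 2 := by
    have := Module.finrank_mul_finrank ℚ Kp K
    rw [hKp3, hK6] at this; omega
  set α : Kp := Algebra.trace Kp K μ with hα
  have hαint : IsIntegral ℤ α := Algebra.isIntegral_trace hμ
  have key : ∀ φ : K →+* ℂ, φ (α : K) = ((2 * (φ μ).re : ℝ) : ℂ) := by
    intro φ
    letI : Algebra Kp ℂ := (φ.comp (algebraMap Kp K)).toAlgebra
    have hmap : ∀ x : Kp, algebraMap Kp ℂ x = φ (x : K) := fun x => rfl
    let f1 : K →ₐ[Kp] ℂ := { φ with commutes' := fun x => rfl }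
    let f2 : K →ₐ[Kp] ℂ := { NumberField.ComplexEmbedding.conjugate φ with
      commutes' := fun x => by
        change (starRingEnd ℂ) (φ (x : K)) = φ (x : K)
        exact Complex.conj_eq_iff_im.2 (hKpreal φ x x.2) }
    have hne : f1 ≠ f2 := by
      intro h
      obtain ⟨x, hx⟩ := hKcomplex φ
      apply hx
      have := congrArg (fun f : K →ₐ[Kp] ℂ => f x) h
      exact Complex.conj_eq_iff_im.1 this.symm
    have hcard : Fintype.card (K →ₐ[Kp] ℂ) = 2 := by rw [AlgHom.card, h2]
    have huniv : (Finset.univ : Finset (K →ₐ[Kp] ℂ)) = {f1, f2} := by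
      symm
      apply Finset.eq_univ_of_card
      rw [Finset.card_pair hne, hcard]
    have ht := trace_eq_sum_embeddings (K := Kp) (L := K) (E := ℂ) (x := μ)
    rw [huniv, Finset.sum_pair hne] at ht
    rw [← hα, hmap] at ht
    rw [ht]
    change φ μ + (starRingEnd ℂ) (φ μ) = _
    exact Complex.add_conj _
  have hα0 : α = 0 := by
    by_contra hne
    have hne' : (α : K) ≠ 0 := by simpa using hne
    have hlt : ∀ φ : K →+* ℂ, ‖φ (α : K)‖ < 1 := by
      intro φ
      rw [key, Complex.norm_real, Real.norm_eq_abs, abs_mul, abs_two]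
      linarith [h φ]
    have hi : IsIntegral ℤ (α : K) := hαint.map (IsScalarTower.toAlgHom ℤ Kp K)
    obtain ⟨n, hn, hp⟩ := NumberField.Embeddings.pow_eq_one_of_norm_le_one K ℂ hne' hi
      (fun φ => (hlt φ).le)
    have h1 := congrArg (fun z => ‖φ z‖) hp
    simp only [map_pow, map_one, norm_pow, norm_one] at h1
    exact absurd h1 (pow_lt_one₀ (norm_nonneg _) (hlt φ) hn.ne').ne
  have := key φ
  rw [hα0] at this
  simp at this
  exact_mod_cast this

open Polynomial in
lemma primitive (K : Type*) [Field K] [NumberField K]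
    (hK6 : finrank ℚ K = 6)
    (hnoquad : ¬ ∃ L : IntermediateField ℚ K, finrank ℚ L = 2)
    (μ : K) (h0 : μ ≠ 0) (hre : ∀ φ : K →+* ℂ, (φ μ).re = 0) :
    IntermediateField.adjoin ℚ {μ} = ⊤ := by
  have hint : IsIntegral ℚ μ := Algebra.IsIntegral.isIntegral μ
  have hdeg := IntermediateField.adjoin.finrank hint
  have hdvd : finrank ℚ (IntermediateField.adjoin ℚ {μ}) ∣ 6 := by
    rw [← hK6]; exact ⟨_, (Module.finrank_mul_finrank ℚ (IntermediateField.adjoin ℚ {μ}) K).symm⟩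
  have hn2 : finrank ℚ (IntermediateField.adjoin ℚ {μ}) ≠ 2 := fun h => hnoquad ⟨_, h⟩
  have heven : ¬ Odd (finrank ℚ (IntermediateField.adjoin ℚ {μ})) := by
    intro ho
    rw [hdeg] at ho
    obtain ⟨φ⟩ : Nonempty (K →+* ℂ) := inferInstance
    have hneg : φ (-μ) = NumberField.ComplexEmbedding.conjugate φ μ := by
      rw [NumberField.ComplexEmbedding.conjugate_coe_eq]
      apply Complex.ext <;> simp [hre φ]
    have hroot : aeval (-μ) (minpoly ℚ μ) = 0 := by
      apply φ.injective
      rw [map_zero]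
      have e1 : φ (aeval (-μ) (minpoly ℚ μ)) = aeval (φ (-μ)) (minpoly ℚ μ) :=
        (aeval_algHom_apply φ.toRatAlgHom _ _).symm
      have e2 : aeval (NumberField.ComplexEmbedding.conjugate φ μ) (minpoly ℚ μ) =
          NumberField.ComplexEmbedding.conjugate φ (aeval μ (minpoly ℚ μ)) :=
        (aeval_algHom_apply (NumberField.ComplexEmbedding.conjugate φ).toRatAlgHom _ _)
      rw [e1, hneg, e2, minpoly.aeval, map_zero]
    have heq : minpoly ℚ μ = minpoly ℚ (-μ) :=
      minpoly.eq_of_irreducible_of_monic (minpoly.irreducible hint) hroot (minpoly.monic hint)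
    rw [minpoly.neg, ho.neg_one_pow] at heq
    have hc := congrArg (fun p => eval 0 p) heq
    simp [eval_comp] at hc
    have hc0 : (minpoly ℚ μ).coeff 0 = 0 := by
      rw [coeff_zero_eq_eval_zero]; linarith
    exact minpoly.coeff_zero_ne_zero hint h0 hc0
  have h6 : finrank ℚ (IntermediateField.adjoin ℚ {μ}) = 6 := by
    have hle := Nat.le_of_dvd (by norm_num) hdvd
    generalize finrank ℚ (IntermediateField.adjoin ℚ {μ}) = n at *
    interval_cases n <;> revert heven hdvd hn2 <;> decide
  exact IntermediateField.eq_of_le_of_finrank_eq le_top (by rw [h6, IntermediateField.finrank_top', hK6])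

lemma discr_formula (K : Type*) [Field K] [NumberField K]
    (ψ : Fin 3 → (K →+* ℂ))
    (hψ : ∀ x, ((Algebra.trace ℚ K x : ℚ) : ℝ) = ∑ j, 2 * (ψ j x).re)
    (b : Fin 3 ⊕ Fin 3 → K) (A : Matrix (Fin 3 ⊕ Fin 3) (Fin 3 ⊕ Fin 3) ℝ)
    (hA : A = Matrix.of (Sum.elim (fun j i => (ψ j (b i)).re) (fun j i => (ψ j (b i)).im))) :
    ((Algebra.discr ℚ b : ℚ) : ℝ) = -64 * A.det ^ 2 := by
  have : (Algebra.traceMatrix ℚ b).map (Rat.castHom ℝ) =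
      A.transpose * Matrix.diagonal (Sum.elim (fun _ => 2) (fun _ => -2)) * A := by
    ext i k
    simp [Matrix.mul_apply, Matrix.diagonal_apply, Algebra.traceMatrix_apply,
      Algebra.traceForm_apply, hψ, hA, Fin.sum_univ_three]
    ring
  rw [Algebra.discr_def]
  have h2 : (((Algebra.traceMatrix ℚ b).det : ℚ) : ℝ) = ((Algebra.traceMatrix ℚ b).map (Rat.castHom ℝ)).det :=
    RingHom.map_det (Rat.castHom ℝ) _
  rw [h2, this, Matrix.det_mul, Matrix.det_mul, Matrix.det_transpose, Matrix.det_diagonal]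
  simp [Fintype.prod_sum_type, Fin.prod_univ_three]
  ring

/-- Proposition `prop:geomnumbers`, case 1. Let `K` be a sextic CM
field (with totally real cubic subfield `K₊`) containing no imaginary quadratic subfield,
and let `𝓞` be an order in `K` (a subring of algebraic integers that is free of rank 6
over `ℤ`). Then there is `μ ∈ 𝓞` with `K = ℚ(μ)`, `μ²` totally negative, and
`0 < -(1/2)·Tr_{K/ℚ}(μ²) ≤ (6/π)^{2/3}·|Δ(𝓞)|^{1/3}`. -/
theorem stmt_1
    (K : Type*) [Field K] [NumberField K]
    (hK6 : finrank ℚ K = 6)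
    (hKcomplex : ∀ φ : K →+* ℂ, ∃ x : K, (φ x).im ≠ 0)
    (Kp : IntermediateField ℚ K)
    (hKp3 : finrank ℚ Kp = 3)
    (hKpreal : ∀ φ : K →+* ℂ, ∀ x ∈ Kp, (φ x).im = 0)
    (hnoquad : ¬ ∃ L : IntermediateField ℚ K, finrank ℚ L = 2)
    (O : Subring K)
    (hOint : ∀ x ∈ O, IsIntegral ℤ x)
    (b : Basis (Fin 6) ℤ O) :
    ∃ μ ∈ O, IntermediateField.adjoin ℚ {μ} = ⊤ ∧
      (∀ φ : K →+* ℂ, (φ (μ ^ 2)).im = 0 ∧ (φ (μ ^ 2)).re < 0) ∧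
      0 < -(1/2 : ℚ) * Algebra.trace ℚ K (μ ^ 2) ∧
      ((-(1/2 : ℚ) * Algebra.trace ℚ K (μ ^ 2) : ℚ) : ℝ) ≤
        (6 / Real.pi) ^ ((2 : ℝ)/3) *
          |((Algebra.discr ℚ (fun i => (b i : K)) : ℚ) : ℝ)| ^ ((1 : ℝ)/3) := by
  classical
  obtain ⟨ψ, hψ, hall⟩ := exists_embs K hK6 hKcomplex
  -- discriminant is nonzero
  have hli : LinearIndependent ℚ (fun i => (b i : K)) := by
    rw [← LinearIndependent.iff_fractionRing (R := ℤ)]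
    have := b.linearIndependent.map' (O.subtype.toAddMonoidHom.toIntLinearMap)
      (LinearMap.ker_eq_bot.2 Subtype.val_injective)
    exact this
  have hdisc : Algebra.discr ℚ (fun i => (b i : K)) ≠ 0 := by
    let B := basisOfLinearIndependentOfCardEqFinrank hli (by simp [hK6])
    have hB : (fun i => (b i : K)) = B := by
      simp [B]
    rw [hB]
    exact Algebra.discr_not_zero_of_basis ℚ B
  let e : Fin 3 ⊕ Fin 3 ≃ Fin 6 := finSumFinEquiv
  let b' : Fin 3 ⊕ Fin 3 → K := fun i => (b (e i) : K)
  have hb' : Algebra.discr ℚ b' = Algebra.discr ℚ (fun i => (b i : K)) := by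
    rw [Algebra.discr_def, Algebra.discr_def, ← Matrix.det_submatrix_equiv_self e]
    rfl
  rw [← hb'] at hdisc ⊢
  set A : Matrix (Fin 3 ⊕ Fin 3) (Fin 3 ⊕ Fin 3) ℝ :=
    Matrix.of (Sum.elim (fun j i => (ψ j (b' i)).re) (fun j i => (ψ j (b' i)).im)) with hA
  have hdA := discr_formula K ψ hψ b' A hA
  have hdet : A.det ≠ 0 := by
    intro h0
    rw [h0] at hdA
    apply hdisc
    have : ((Algebra.discr ℚ b' : ℚ) : ℝ) = 0 := by rw [hdA]; ring
    exact_mod_cast this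
  have habs : |((Algebra.discr ℚ b' : ℚ) : ℝ)| = 64 * |A.det| ^ 2 := by
    rw [hdA, abs_mul, abs_pow]; norm_num
  set R : ℝ := (6 / Real.pi) ^ ((2 : ℝ)/3) * |((Algebra.discr ℚ b' : ℚ) : ℝ)| ^ ((1 : ℝ)/3) with hR
  have hpi := Real.pi_pos
  have h6pi : 0 ≤ 6 / Real.pi := div_nonneg (by norm_num) hpi.le
  have hR0 : 0 ≤ R := mul_nonneg (Real.rpow_nonneg h6pi _) (Real.rpow_nonneg (abs_nonneg _) _)
  have hR3 : R ^ 3 = (6 / Real.pi) ^ 2 * (64 * |A.det| ^ 2) := by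
    rw [hR, mul_pow, ← habs, ← Real.rpow_natCast, ← Real.rpow_natCast, ← Real.rpow_mul h6pi,
      ← Real.rpow_mul (abs_nonneg _)]
    norm_num
  set ρ : ℝ := ((⌊2 * R⌋ : ℝ) + 1) / 2 with hρ
  have hρR : R < ρ := by
    have := Int.lt_floor_add_one (2 * R)
    rw [hρ]; linarith
  have hρ0 : 0 < ρ := lt_of_le_of_lt hR0 hρR
  have hr0 : 0 < √ρ := Real.sqrt_pos.2 hρ0
  have hr2 : √ρ ^ 2 = ρ := Real.sq_sqrt hρ0.le
  have hbig : 48 * |A.det| < Real.pi * √ρ ^ 3 := by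
    apply lt_of_pow_lt_pow_left₀ 2 (mul_nonneg hpi.le (pow_nonneg hr0.le 3))
    have h3 : R ^ 3 < ρ ^ 3 := pow_lt_pow_left₀ hρR hR0 (by norm_num)
    have e1 : (Real.pi * √ρ ^ 3) ^ 2 = Real.pi ^ 2 * ρ ^ 3 := by
      rw [← hr2]; simp; ring
    have e2 : (48 * |A.det|) ^ 2 = Real.pi ^ 2 * R ^ 3 := by
      rw [hR3]; field_simp; norm_num
    rw [e1, e2]
    exact mul_lt_mul_of_pos_left h3 (pow_pos hpi 2)
  obtain ⟨c, hc0, hcre, hcim⟩ := minkowski_body A hdet (√ρ) hr0 hbig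
  rw [hr2] at hcim
  set m : O := ∑ i, c i • b (e i) with hm
  have hm0 : m ≠ 0 := by
    intro h0
    apply hc0
    have := Fintype.linearIndependent_iff.1 (b.linearIndependent.comp e e.injective) c (by simpa [hm] using h0)
    exact funext this
  have hμ0 : (m : K) ≠ 0 := by simpa using hm0
  have hmK : (m : K) = ∑ i, (c i : K) * b' i := by
    rw [hm]; simp [b', -Fintype.sum_sum_type]
  have hψm : ∀ j, ψ j (m : K) = ∑ i, (c i : ℂ) * ψ j (b' i) := by
    intro j
    rw [hmK]; simp [-Fintype.sum_sum_type]
  have hAre : ∀ j, (A.mulVec (fun i => (c i : ℝ))) (Sum.inl j) = (ψ j (m : K)).re := by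
    intro j
    rw [hψm, Complex.re_sum]
    simp only [Matrix.mulVec, dotProduct]
    refine Finset.sum_congr rfl fun i _ => ?_
    simp [hA, mul_comm]
  have hAim : ∀ j, (A.mulVec (fun i => (c i : ℝ))) (Sum.inr j) = (ψ j (m : K)).im := by
    intro j
    rw [hψm, Complex.im_sum]
    simp only [Matrix.mulVec, dotProduct]
    refine Finset.sum_congr rfl fun i _ => ?_
    simp [hA, mul_comm]
  simp only [hAre] at hcre
  simp only [hAim] at hcim
  have hreall : ∀ φ : K →+* ℂ, |(φ (m : K)).re| < 1/2 := by
    intro φ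
    obtain ⟨j, rfl | rfl⟩ := hall φ
    · exact hcre j
    · rw [NumberField.ComplexEmbedding.conjugate_coe_eq, Complex.conj_re]; exact hcre j
  have hmint : IsIntegral ℤ (m : K) := hOint _ m.2
  have hre0 : ∀ φ : K →+* ℂ, (φ (m : K)).re = 0 :=
    re_zero K hK6 hKcomplex Kp hKp3 hKpreal m hmint hreall
  have him0 : ∀ φ : K →+* ℂ, (φ (m : K)).im ≠ 0 := by
    intro φ h
    apply hμ0
    apply φ.injective
    rw [map_zero]
    exact Complex.ext (hre0 φ) h
  have hsqre : ∀ φ : K →+* ℂ, (φ ((m : K) ^ 2)).re = -(φ (m : K)).im ^ 2 := by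
    intro φ
    rw [map_pow, pow_two, Complex.mul_re, hre0 φ]; ring
  have htr : ((-(1/2 : ℚ) * Algebra.trace ℚ K ((m : K) ^ 2) : ℚ) : ℝ) = ∑ j, (ψ j (m : K)).im ^ 2 := by
    push_cast
    rw [hψ]
    simp only [hsqre, Fin.sum_univ_three]
    ring
  refine ⟨m, m.2, primitive K hK6 hnoquad m hμ0 hre0, fun φ => ⟨?_, ?_⟩, ?_, ?_⟩
  · rw [map_pow, pow_two, Complex.mul_im, hre0 φ]; ring
  · rw [hsqre φ]
    have := sq_pos_of_ne_zero (him0 φ)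
    linarith
  · have : (0 : ℝ) < ((-(1/2 : ℚ) * Algebra.trace ℚ K ((m : K) ^ 2) : ℚ) : ℝ) := by
      rw [htr]
      exact Finset.sum_pos (fun j _ => sq_pos_of_ne_zero (him0 _)) Finset.univ_nonempty
    exact_mod_cast this
  · rw [← htr] at hcim
    obtain ⟨n, hn⟩ := IsIntegrallyClosed.isIntegral_iff.1
      (Algebra.isIntegral_trace (L := ℚ) (hmint.pow 2))
    simp only [eq_intCast] at hn
    rw [← hn] at hcim ⊢
    push_cast at hcim ⊢
    have h1 : ((-n : ℤ) : ℝ) < ((⌊2 * R⌋ + 1 : ℤ) : ℝ) := by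
      push_cast
      rw [hρ] at hcim
      linarith
    have h2 : -n ≤ ⌊2 * R⌋ := Int.lt_add_one_iff.1 (by exact_mod_cast h1)
    have h3 := Int.le_floor.1 h2
    push_cast at h3
    linarith
end

section
/- Let K be a sextic CM field (a number field of degree 6 over ℚ, totally complex, containing a totally real subfield K₊ with [K₊:ℚ] = 3) that contains an imaginary quadratic subfield K₁ (a subfield with [K₁:ℚ] = 2 which is totally complex). Let 𝓞 be an order in K, and let μ ∈ 𝓞 be such that K = ℚ(μ) and μ² is totally negative; set B = −(1/2)·Tr_{K/ℚ}(μ²). Let p be a prime number with (p : ℝ) > (1/4)·B^{15/2}. Then there exists a positive integer δ with p ∤ δ and an element x ∈ 𝓞 ∩ K₁ with x² = −δ. -/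
open Module

section aux
open Polynomial

lemma aux_sep {R : Type*} [Field R] (b c d : R) (h : b^2*c^2-4*c^3-4*b^3*d-27*d^2+18*b*c*d ≠ 0) :
    (X^3 + C b * X^2 + C c * X + C d : R[X]).Separable := by
  rw [Polynomial.separable_def']
  set D := b^2*c^2-4*c^3-4*b^3*d-27*d^2+18*b*c*d with hD
  have key : ∀ b c d x : R[X], (3*(6*c-2*b^2)*x+2*b*(6*c-2*b^2)-3*(9*d-b*c)) * (x^3+b*x^2+c*x+d)
     + (-(4*c^2-b^2*c-3*b*d + (6*c-2*b^2)*x^2 + (b*(6*c-2*b^2) - (9*d-b*c))*x)) * (3*x^2+2*b*x+c)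
     = b^2*c^2-4*c^3-4*b^3*d-27*d^2+18*b*c*d := by intros; ring
  have k2 := key (C b) (C c) (C d) X
  have hDC : (C b)^2*(C c)^2-4*(C c)^3-4*(C b)^3*(C d)-27*(C d)^2+18*(C b)*(C c)*(C d) = C D := by
    simp only [hD, C_add, C_sub, C_mul, C_pow, map_ofNat]
  have hder : derivative (X^3 + C b * X^2 + C c * X + C d : R[X]) = 3*X^2+2*C b*X+C c := by
    simp only [derivative_add, derivative_X_pow, derivative_C_mul, derivative_C, derivative_X]; simp [map_ofNat]
    have : (C 2 : R[X]) = 2 := map_ofNat _ 2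
    have h3 : (C 3 : R[X]) = 3 := map_ofNat _ 3
    ring
  rw [hDC] at k2
  have hinv : C D⁻¹ * C D = 1 := by rw [← C_mul, inv_mul_cancel₀ h, C_1]
  rw [hder]
  refine ⟨C D⁻¹ * (3*(6*C c-2*C b^2)*X+2*C b*(6*C c-2*C b^2)-3*(9*C d-C b*C c)), C D⁻¹ * (-(4*C c^2-C b^2*C c-3*C b*C d + (6*C c-2*C b^2)*X^2 + (C b*(6*C c-2*C b^2) - (9*C d-C b*C c))*X)), ?_⟩
  linear_combination C D⁻¹ * k2 + hinv

/-- mod p argument -/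
lemma aux_modp (p : ℕ) [Fact p.Prime] (g q : ℤ[X]) (b c d δ : ℤ)
    (hg : g = X^3 + C b * X^2 + C c * X + C d)
    (hd : ¬ (p:ℤ) ∣ d) (hD : ¬ (p:ℤ) ∣ b^2*c^2-4*c^3-4*b^3*d-27*d^2+18*b*c*d)
    (hq : q.IsPrimitive) (hqd : q.natDegree < 3) (hdvd : g ∣ X * q^2 - C δ) : ¬ (p:ℤ) ∣ δ := by
  intro hδ
  let f := Int.castRingHom (ZMod p)
  have h0 : ∀ z : ℤ, f z = 0 ↔ (p:ℤ) ∣ z := fun z => by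
    simpa [f] using ZMod.intCast_zmod_eq_zero_iff_dvd z p
  have hgm : g.map f = X^3 + C (f b) * X^2 + C (f c) * X + C (f d) := by simp [hg]
  have hsep : (g.map f).Separable := by
    rw [hgm]
    apply aux_sep
    intro h
    apply hD
    rw [← h0]
    simpa using h
  have hdv : g.map f ∣ (q.map f)^2 * X := by
    have := Polynomial.map_dvd f hdvd
    simpa [-eq_intCast, (h0 δ).2 hδ, mul_comm] using this
  have hcop : IsCoprime (g.map f) X := by
    rw [isCoprime_comm]
    apply (Polynomial.irreducible_X).coprime_iff_not_dvd.2
    rw [Polynomial.X_dvd_iff, hgm]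
    simpa [-eq_intCast, h0] using hd
  have h2 := hcop.dvd_of_dvd_mul_right hdv
  rw [hsep.squarefree.dvd_pow_iff_dvd two_ne_zero] at h2
  have hdeg : (g.map f).natDegree = 3 := by rw [hgm]; compute_degree!
  have hz : q.map f = 0 := by
    by_contra hne
    have := Polynomial.natDegree_le_of_dvd h2 hne
    have := Polynomial.natDegree_map_le (f := f) (p := q)
    omega
  have hC : C (p:ℤ) ∣ q := by
    rw [Polynomial.C_dvd_iff_dvd_coeff]
    intro i
    rw [← h0, ← Polynomial.coeff_map, hz, coeff_zero]
  have hu := hq _ hC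
  have := Int.isUnit_iff.1 hu
  have := (Fact.out : p.Prime).two_le
  omega

lemma aux_bound (x y z : ℝ) (hx : 0 < x) (hy : 0 < y) (hz : 0 < z) (h1 : 1 ≤ x*y*z) (P : ℝ)
   (hP : P > (1/4) * (x+y+z)^((15:ℝ)/2)) :
   x*y*z < P ∧ ((x-y)*(y-z)*(z-x))^2 < P := by
  set B := x+y+z with hB
  have hB27 : 27 ≤ B^3 := by
    have : 27 * (x*y*z) ≤ B^3 := by
      rw [hB]
      nlinarith [mul_nonneg hx.le (sq_nonneg (y-z)), mul_nonneg hy.le (sq_nonneg (x-z)), mul_nonneg hz.le (sq_nonneg (y-x)),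
        mul_nonneg hx.le (sq_nonneg (x-z)), mul_nonneg hx.le (sq_nonneg (x-y)), mul_nonneg hy.le (sq_nonneg (y-z)), mul_nonneg hy.le (sq_nonneg (y-x)),
        mul_nonneg hz.le (sq_nonneg (z-x)), mul_nonneg hz.le (sq_nonneg (z-y))]
    linarith
  have hBpos : 0 < B := by positivity
  have hsq : (B^((15:ℝ)/2))^2 = B^15 := by
    rw [← Real.rpow_natCast, ← Real.rpow_mul hBpos.le, ← Real.rpow_natCast]; norm_num
  have h4 : 4 * B^6 ≤ B^((15:ℝ)/2) := by
    refine le_of_sq_le_sq ?_ (by positivity)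
    rw [hsq]
    have : 0 ≤ B^12 * (B^3 - 27) := mul_nonneg (by positivity) (by linarith)
    have h12 : 0 < B^12 := by positivity
    have e1 : (4 * B^6)^2 = 16 * B^12 := by ring
    have e2 : B^15 = B^12 * (B^3 - 27) + 27 * B^12 := by ring
    rw [e1, e2]; linarith
  have hPB : B^6 < P := by linarith
  have hxyz : x*y*z ≤ B^3 := by
    have a1 : x ≤ B := by linarith
    have a2 : y ≤ B := by linarith
    have a3 : z ≤ B := by linarith
    calc x*y*z ≤ B*B*B := by gcongr
      _ = B^3 := by ring
  constructor
  · have e : B^6 = B^3 * B^3 := by ring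
    have : B^3 ≤ B^3 * B^3 := le_mul_of_one_le_right (by positivity) (by linarith)
    linarith
  · refine lt_of_le_of_lt ?_ hPB
    have a1 : |x-y| ≤ B := by rw [abs_le]; constructor <;> linarith
    have a2 : |y-z| ≤ B := by rw [abs_le]; constructor <;> linarith
    have a3 : |z-x| ≤ B := by rw [abs_le]; constructor <;> linarith
    rw [← sq_abs, abs_mul, abs_mul]
    calc (|x-y| * |y-z| * |z-x|)^2 ≤ (B*B*B)^2 := by gcongr
      _ = B^6 := by ring

lemma aux_field (K : Type*) [Field K] [NumberField K] (hK6 : finrank ℚ K = 6) (φ : K →+* ℂ)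
    (hφ : ∃ x : K, (φ x).im ≠ 0) (μ : K) (hgen : IntermediateField.adjoin ℚ {μ} = ⊤)
    (hμ : (φ (-μ ^ 2)).im = 0) :
    finrank ℚ (IntermediateField.adjoin ℚ {-μ^2}) = 3 ∧
    ∀ y : K, (φ y).im = 0 → y ∈ IntermediateField.adjoin ℚ {-μ^2} := by
  set E := IntermediateField.adjoin ℚ {-μ^2} with hE
  let R : IntermediateField ℚ K :=
    ((Complex.ofRealAm.restrictScalars ℚ).fieldRange).comap φ.toRatAlgHom
  have hR : ∀ y, y ∈ R ↔ (φ y).im = 0 := by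
    intro y
    change (∃ r : ℝ, (r : ℂ) = φ y) ↔ _
    constructor
    · rintro ⟨r, hr⟩
      rw [← hr]; simp
    · intro h
      exact ⟨(φ y).re, by apply Complex.ext <;> simp [h]⟩
  have hER : E ≤ R := by
    rw [hE, IntermediateField.adjoin_simple_le_iff, hR]; exact hμ
  have hRtop : R ≠ ⊤ := by
    intro h
    obtain ⟨x, hx⟩ := hφ
    apply hx
    rw [← hR, h]; trivial
  have htE : -μ^2 ∈ E := IntermediateField.mem_adjoin_simple_self ℚ _
  have hgenE : IntermediateField.adjoin E {μ} = ⊤ :=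
    IntermediateField.adjoin_eq_top_of_adjoin_eq_top ℚ hgen
  have hint : IsIntegral E μ := Algebra.IsIntegral.isIntegral μ
  have h2 : finrank E K ≤ 2 := by
    rw [← IntermediateField.finrank_top', ← hgenE, IntermediateField.adjoin.finrank hint]
    let f : E[X] := X^2 + C ⟨-μ^2, htE⟩
    have hf : f.natDegree = 2 := by simp only [f]; compute_degree!
    have hf0 : f ≠ 0 := by intro h; rw [h] at hf; simp at hf
    rw [← hf]
    apply Polynomial.natDegree_le_of_dvd _ hf0
    apply minpoly.dvd
    simp [f]
  have hmul : finrank ℚ E * finrank E K = 6 := by rw [Module.finrank_mul_finrank, hK6]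
  have hmulR : finrank ℚ R * finrank R K = 6 := by rw [Module.finrank_mul_finrank, hK6]
  have hR1 : finrank R K ≠ 1 := by rw [Ne, IntermediateField.finrank_eq_one_iff_eq_top]; exact hRtop
  have hle : finrank ℚ E ∣ finrank ℚ R := IntermediateField.finrank_dvd_of_le_right hER
  have h1 : finrank E K ≠ 1 := by
    rw [Ne, IntermediateField.finrank_eq_one_iff_eq_top]
    intro h; apply hRtop; rw [h] at hER; exact top_le_iff.1 hER
  have hE3 : finrank ℚ E = 3 := by
    have : finrank E K = 2 := by
      have : finrank E K ≠ 0 := by intro h; rw [h] at hmul; simp at hmul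
      omega
    rw [this] at hmul; omega
  refine ⟨hE3, ?_⟩
  have hR3 : finrank ℚ R = 3 := by
    rw [hE3] at hle
    obtain ⟨k, hk⟩ := hle
    rw [hk] at hmulR ⊢
    have : k * finrank R K = 2 := by nlinarith
    have h5 : finrank R K ∣ 2 := ⟨k, by rw [← this]; ring⟩
    rcases (Nat.dvd_prime Nat.prime_two).1 h5 with h | h
    · exact absurd h hR1
    · rw [h] at this; omega
  have : E = R := IntermediateField.eq_of_le_of_finrank_eq hER (by rw [hE3, hR3])
  intro y hy
  rw [this, hR]; exact hy

lemma aux_K1 (K : Type*) [Field K] [NumberField K] (φ : K →+* ℂ) (K1 : IntermediateField ℚ K)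
    (hK12 : finrank ℚ K1 = 2)
    (hK1complex : ∀ ψ : K1 →+* ℂ, ∃ x : K1, (ψ x).im ≠ 0) :
    ∃ s : K, s ∈ K1 ∧ (φ s).re = 0 ∧ (φ s).im ≠ 0 ∧ ∃ r : ℚ, s^2 = (r : K) ∧ r < 0 := by
  obtain ⟨x, hx⟩ := hK1complex (φ.comp (algebraMap K1 K))
  change (φ (x:K)).im ≠ 0 at hx
  have hint : IsIntegral ℚ x := Algebra.IsIntegral.isIntegral x
  -- linear relation
  have hdeg : (minpoly ℚ x).natDegree = 2 := by
    have h1 := minpoly.natDegree_le (A := ℚ) x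
    rw [hK12] at h1
    have h0 := minpoly.natDegree_pos hint
    have hn1 : (minpoly ℚ x).natDegree ≠ 1 := by
      intro h
      rw [minpoly.natDegree_eq_one_iff] at h
      obtain ⟨q, hq⟩ := h
      apply hx
      rw [← hq]
      have : φ ((algebraMap ℚ K1 q : K1) : K) = (q : ℂ) := by
        simp
      rw [this]; simp
    omega
  set m := minpoly ℚ x
  have hm : m.Monic := minpoly.monic hint
  have hrel : (x:K)^2 + ((m.coeff 1 : ℚ):K) * x + ((m.coeff 0 : ℚ) : K) = 0 := by
    have h := minpoly.aeval ℚ x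
    change aeval x m = 0 at h
    rw [hm.as_sum, hdeg] at h
    simp [Finset.sum_range_succ] at h
    have := congrArg (fun t : K1 => (t : K)) h
    simp at this
    linear_combination this
  set a := m.coeff 1
  set c := m.coeff 0
  have hs2 : ((x:K) + ((a/2 : ℚ) : K))^2 = ((a^2/4 - c : ℚ) : K) := by
    push_cast
    linear_combination hrel
  have him : (φ ((x:K) + ((a/2 : ℚ) : K))).im ≠ 0 := by
    rw [map_add, map_ratCast, Complex.add_im, Complex.ratCast_im, add_zero]; exact hx
  set s := (x:K) + ((a/2 : ℚ) : K) with hs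
  have hφs := congrArg φ hs2
  rw [map_pow, map_ratCast] at hφs
  have hI := congrArg Complex.im hφs
  have hRe := congrArg Complex.re hφs
  simp only [pow_two, Complex.mul_im, Complex.mul_re, Complex.ratCast_im, Complex.ratCast_re] at hI hRe
  have hre : (φ s).re = 0 := by
    have : (φ s).re * (φ s).im = 0 := by linarith
    exact (mul_eq_zero.1 this).resolve_right him
  refine ⟨s, ?_, hre, him, _, hs2, ?_⟩
  · exact add_mem x.2 (by exact_mod_cast K1.algebraMap_mem (a/2))
  · rw [hre] at hRe
    have : (0:ℝ) < (φ s).im * (φ s).im := mul_self_pos.2 him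
    have h2 : (((a^2/4 - c : ℚ)) : ℝ) < 0 := by
      simp only [pow_two]; linarith
    exact_mod_cast h2

lemma aux_prim (q0 : ℚ[X]) (h0 : q0 ≠ 0) : ∃ (q : ℤ[X]) (t : ℚ), t ≠ 0 ∧ q.IsPrimitive ∧
    q.natDegree = q0.natDegree ∧ q.map (algebraMap ℤ ℚ) = C t * q0 := by
  obtain ⟨b, hb, h⟩ := IsLocalization.integerNormalization_spec (nonZeroDivisors ℤ) q0
  set q1 := IsLocalization.integerNormalization (nonZeroDivisors ℤ) q0
  have hb0 : (b:ℚ) ≠ 0 := by exact_mod_cast nonZeroDivisors.ne_zero hb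
  have hmapb : q1.map (algebraMap ℤ ℚ) = C (b:ℚ) * q0 := by
    rw [h]; ext i; simp
  have hq1 : q1 ≠ 0 := by
    intro hq
    rw [hq] at hmapb
    simp [h0] at hmapb
    exact hb0 (by exact_mod_cast hmapb)
  have hc0 : q1.content ≠ 0 := by rwa [Ne, content_eq_zero_iff]
  have hc : (q1.content : ℚ) ≠ 0 := by exact_mod_cast hc0
  have hmap : q1.primPart.map (algebraMap ℤ ℚ) = C ((b:ℚ)/q1.content) * q0 := by
    have h2 := congrArg (Polynomial.map (algebraMap ℤ ℚ)) q1.eq_C_content_mul_primPart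
    rw [hmapb, Polynomial.map_mul, Polynomial.map_C] at h2
    have : C ((b:ℚ)/q1.content) = C ((q1.content:ℚ)⁻¹) * C (b:ℚ) := by rw [← C_mul]; congr 1; field_simp
    rw [this, mul_assoc, h2, ← mul_assoc, ← C_mul]
    simp only [algebraMap_int_eq, eq_intCast]
    rw [inv_mul_cancel₀ hc, C_1, one_mul]
  refine ⟨q1.primPart, _, div_ne_zero hb0 hc, q1.isPrimitive_primPart, ?_, hmap⟩
  rw [← Polynomial.natDegree_map_eq_of_injective (f := algebraMap ℤ ℚ) (RingHom.injective_int _), hmap,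
    natDegree_C_mul (div_ne_zero hb0 hc)]

lemma aux_roots (K : Type*) [Field K] [NumberField K] (hK6 : finrank ℚ K = 6) (θ : K)
    (hint : IsIntegral ℤ θ) (h3 : finrank ℚ (IntermediateField.adjoin ℚ {θ}) = 3)
    (hpos : ∀ φ : K →+* ℂ, (φ θ).im = 0 ∧ 0 < (φ θ).re) :
    ∃ (x y z : ℝ) (b c d : ℤ), 0 < x ∧ 0 < y ∧ 0 < z ∧ (x-y)*(y-z)*(z-x) ≠ 0 ∧
     minpoly ℤ θ = X^3 + C b * X^2 + C c * X + C d ∧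
     (b:ℝ) = -(x+y+z) ∧ (c:ℝ) = x*y+y*z+z*x ∧ (d:ℝ) = -(x*y*z) ∧
     ((Algebra.trace ℚ K θ : ℚ) : ℝ) = 2*(x+y+z) := by
  have hintQ : IsIntegral ℚ θ := Algebra.IsIntegral.isIntegral θ
  have hQZ := minpoly.isIntegrallyClosed_eq_field_fractions' ℚ hint
  have hdegQ : (minpoly ℚ θ).natDegree = 3 := by rw [← IntermediateField.adjoin.finrank hintQ, h3]
  have hmZ : (minpoly ℤ θ).Monic := minpoly.monic hint
  have hdegZ : (minpoly ℤ θ).natDegree = 3 := by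
    rw [← hdegQ, hQZ, hmZ.natDegree_map]
  have hmQ : (minpoly ℚ θ).Monic := minpoly.monic hintQ
  have hsplit : ((minpoly ℚ θ).map (algebraMap ℚ ℂ)).Splits := IsAlgClosed.splits _
  have hcard : ((minpoly ℚ θ).aroots ℂ).card = 3 := by
    rw [aroots, ← hsplit.natDegree_eq_card_roots, natDegree_map, hdegQ]
  have hnd : ((minpoly ℚ θ).aroots ℂ).Nodup :=
    nodup_aroots_iff_of_splits hmQ.ne_zero hsplit |>.2 (minpoly.irreducible hintQ).separable
  have hprod := hsplit.eq_prod_roots_of_monic (hmQ.map _)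
  have htr := trace_eq_sum_roots (K := ℚ) (L := K) (F := ℂ) (x := θ) hsplit
  have h2 : finrank (IntermediateField.adjoin ℚ {θ}) K = 2 := by
    have := Module.finrank_mul_finrank ℚ (IntermediateField.adjoin ℚ {θ}) K
    rw [h3, hK6] at this; omega
  rw [h2] at htr
  have hroots : ∀ w ∈ (minpoly ℚ θ).aroots ℂ, ∃ r : ℝ, 0 < r ∧ w = (r:ℂ) := by
    intro w hw
    have : w ∈ (minpoly ℚ θ).rootSet ℂ := by
      rw [mem_rootSet]; rw [mem_aroots] at hw; exact hw
    rw [← NumberField.Embeddings.range_eval_eq_rootSet_minpoly] at this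
    obtain ⟨φ, rfl⟩ := this
    exact ⟨(φ θ).re, (hpos φ).2, by apply Complex.ext <;> simp [(hpos φ).1]⟩
  change _ = (Multiset.map (fun x => X - C x) ((minpoly ℚ θ).aroots ℂ)).prod at hprod
  obtain ⟨rootx, rooty, rootz, hxyz⟩ := Multiset.card_eq_three.1 hcard
  rw [hxyz] at hroots htr hprod hnd
  obtain ⟨x, hx, rfl⟩ := hroots rootx (by simp)
  obtain ⟨y, hy, rfl⟩ := hroots rooty (by simp)
  obtain ⟨z, hz, rfl⟩ := hroots rootz (by simp)
  have hZ : minpoly ℤ θ = X^3 + C ((minpoly ℤ θ).coeff 2) * X^2 + C ((minpoly ℤ θ).coeff 1) * X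
      + C ((minpoly ℤ θ).coeff 0) := by
    conv_lhs => rw [hmZ.as_sum, hdegZ]
    simp only [Finset.sum_range_succ, Finset.sum_range_zero]
    ring
  set b := (minpoly ℤ θ).coeff 2 with hb
  set c := (minpoly ℤ θ).coeff 1 with hc
  set d := (minpoly ℤ θ).coeff 0 with hd
  have hexp : (minpoly ℚ θ).map (algebraMap ℚ ℂ) = X^3 + C (-((x:ℂ)+y+z)) * X^2
      + C ((x:ℂ)*y+y*z+z*x) * X + C (-((x:ℂ)*y*z)) := by
    rw [hprod]
    simp
    ring
  have hmap : (minpoly ℚ θ).map (algebraMap ℚ ℂ) = (minpoly ℤ θ).map (algebraMap ℤ ℂ) := by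
    rw [hQZ, Polynomial.map_map]; congr 1
  rw [hmap] at hexp
  have hcoef : ∀ i, (((minpoly ℤ θ).coeff i : ℤ) : ℂ) = (X^3 + C (-((x:ℂ)+y+z)) * X^2
      + C ((x:ℂ)*y+y*z+z*x) * X + C (-((x:ℂ)*y*z))).coeff i := by
    intro i; rw [← hexp, coeff_map]; simp
  refine ⟨x, y, z, b, c, d, hx, hy, hz, ?_, hZ, ?_, ?_, ?_, ?_⟩
  · simp at hnd
    obtain ⟨⟨h1, h2⟩, h3⟩ := hnd
    refine mul_ne_zero (mul_ne_zero (sub_ne_zero.2 h1) (sub_ne_zero.2 h3)) (sub_ne_zero.2 (Ne.symm h2))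
  · have := hcoef 2
    rw [← hb] at this
    simp only [coeff_add, coeff_X_pow, coeff_C_mul, coeff_X, coeff_C] at this
    norm_num at this
    apply Complex.ofReal_injective; push_cast; rw [this]; ring
  · have := hcoef 1
    rw [← hc] at this
    simp only [coeff_add, coeff_X_pow, coeff_C_mul, coeff_X, coeff_C] at this
    norm_num at this
    apply Complex.ofReal_injective; push_cast; rw [this]
  · have := hcoef 0
    rw [← hd] at this
    simp only [coeff_add, coeff_X_pow, coeff_C_mul, coeff_X, coeff_C] at this
    norm_num at this
    apply Complex.ofReal_injective; push_cast; rw [this]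
  · apply Complex.ofReal_injective; push_cast
    simp at htr
    rw [htr]; ring

lemma aux_final (K : Type*) [Field K] [NumberField K] (O : Subring K)
    (hOint : ∀ x ∈ O, IsIntegral ℤ x) (K1 : IntermediateField ℚ K) (φ : K →+* ℂ)
    (μ : K) (hμO : μ ∈ O) (hμ2 : (φ (μ ^ 2)).im = 0 ∧ (φ (μ ^ 2)).re < 0)
    (h3 : finrank ℚ (IntermediateField.adjoin ℚ {-μ^2}) = 3)
    (hreal : ∀ y : K, (φ y).im = 0 → y ∈ IntermediateField.adjoin ℚ {-μ^2})
    (x y z : ℝ) (b c d : ℤ) (hx : 0 < x) (hy : 0 < y) (hz : 0 < z)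
    (hne : (x-y)*(y-z)*(z-x) ≠ 0)
    (hmin : minpoly ℤ (-μ^2) = X^3 + C b * X^2 + C c * X + C d)
    (hb : (b:ℝ) = -(x+y+z)) (hc : (c:ℝ) = x*y+y*z+z*x) (hd : (d:ℝ) = -(x*y*z))
    (s : K) (hsK1 : s ∈ K1) (hsre : (φ s).re = 0) (hsim : (φ s).im ≠ 0)
    (r : ℚ) (hsr : s^2 = (r : K)) (hr : r < 0) (p : ℕ) (hp : p.Prime)
    (hpbig : (p : ℝ) > (1/4) * (x+y+z) ^ ((15 : ℝ)/2)) :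
    ∃ δ : ℕ, 0 < δ ∧ ¬ (p ∣ δ) ∧ ∃ x : K, x ∈ O ∧ x ∈ K1 ∧ x ^ 2 = -(δ : K) := by
  have : Fact p.Prime := ⟨hp⟩
  set θ := -μ^2 with hθ
  have hθO : θ ∈ O := neg_mem (pow_mem hμO 2)
  have hint : IsIntegral ℤ θ := hOint _ hθO
  have hintQ : IsIntegral ℚ θ := Algebra.IsIntegral.isIntegral θ
  -- the element `s * μ` is real
  have hμre : (φ μ).re = 0 := by
    have h1 := hμ2.1
    have h2 := hμ2.2
    rw [map_pow, pow_two] at h1 h2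
    rw [Complex.mul_im] at h1
    rw [Complex.mul_re] at h2
    by_contra h
    have h4 : (φ μ).re * (φ μ).im = 0 := by linarith
    have h5 : (φ μ).im = 0 := (mul_eq_zero.1 h4).resolve_left h
    rw [h5] at h2
    nlinarith [mul_self_nonneg (φ μ).re]
  have hμ0 : μ ≠ 0 := by
    rintro rfl
    have := hμ2.2
    simp at this
  have hs0 : s ≠ 0 := by
    rintro rfl
    simp at hsim
  have hmem : s * μ ∈ IntermediateField.adjoin ℚ {θ} := by
    apply hreal
    rw [map_mul, Complex.mul_im, hμre, hsre]; ring
  have hmem2 : -(s * μ) / θ ∈ IntermediateField.adjoin ℚ {θ} :=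
    div_mem (neg_mem hmem) (IntermediateField.mem_adjoin_simple_self ℚ θ)
  have hsq : s = μ * (-(s * μ) / θ) := by rw [hθ]; field_simp
  obtain ⟨q0, hq0deg, hq0⟩ := (IntermediateField.adjoin.powerBasis hintQ).exists_eq_aeval ⟨_, hmem2⟩
  have hdeg0 : q0.natDegree < 3 := by
    rw [← h3, (IntermediateField.adjoin.powerBasis hintQ).finrank]; exact hq0deg
  have hq0' : -(s * μ) / θ = aeval θ q0 := by
    have := congrArg (IntermediateField.adjoin ℚ {θ}).val hq0
    rw [← Polynomial.aeval_algHom_apply] at this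
    simpa using this
  rw [hq0'] at hsq
  have hq00 : q0 ≠ 0 := by
    rintro rfl
    rw [map_zero, mul_zero] at hsq
    exact hs0 hsq
  obtain ⟨q, t, ht, hprim, hqdeg, hqmap⟩ := aux_prim q0 hq00
  have hqa : aeval θ q = (t : K) * aeval θ q0 := by
    have : aeval θ q = aeval θ (q.map (algebraMap ℤ ℚ)) := by rw [aeval_map_algebraMap]
    rw [this, hqmap, map_mul, aeval_C]; simp
  have hXs : μ * aeval θ q = (t:K) * s := by
    rw [hqa]
    linear_combination (-(t:K)) * hsq
  have hXO : μ * aeval θ q ∈ O := by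
    apply mul_mem hμO
    rw [aeval_eq_sum_range]
    exact sum_mem fun i _ => zsmul_mem (pow_mem hθO i) _
  have hX2 : (μ * aeval θ q)^2 = ((t^2*r : ℚ) : K) := by
    rw [hXs, mul_pow, hsr]; push_cast; ring
  have hintr : IsIntegral ℤ (t^2*r : ℚ) := by
    have h1 : IsIntegral ℤ ((algebraMap ℚ K) (t^2*r)) := by
      have := hOint _ (pow_mem hXO 2)
      rw [hX2] at this
      simpa using this
    exact (isIntegral_algebraMap_iff (algebraMap ℚ K).injective).1 h1
  obtain ⟨m, hm⟩ := IsIntegrallyClosed.isIntegral_iff.1 hintr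
  have hm' : (m:ℚ) = t^2*r := by simpa using hm
  have hmneg : m < 0 := by
    have : (m:ℚ) < 0 := by
      rw [hm']
      exact mul_neg_of_pos_of_neg (by positivity) hr
    exact_mod_cast this
  have hX2' : (μ * aeval θ q)^2 = (m:K) := by
    rw [hX2, ← hm']; simp
  obtain ⟨δ, hδ⟩ := Int.eq_ofNat_of_zero_le (a := -m) (by omega)
  have hmδ : m = -(δ:ℤ) := by omega
  -- bounds
  have h1 : 1 ≤ x*y*z := by
    have h0 : 0 < x*y*z := by positivity
    have : (d:ℝ) < 0 := by rw [hd]; linarith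
    have h2 : d < 0 := by exact_mod_cast this
    have h4 : d ≤ -1 := by omega
    have h5 : (d:ℝ) ≤ -1 := by exact_mod_cast h4
    linarith
  obtain ⟨hB1, hB2⟩ := aux_bound x y z hx hy hz h1 p hpbig
  refine ⟨δ, by omega, ?_, μ * aeval θ q, hXO, ?_, ?_⟩
  · intro hpd
    refine aux_modp p (minpoly ℤ θ) q b c d δ hmin ?_ ?_ hprim (by omega) ?_
      (Int.natCast_dvd_natCast.2 hpd)
    · intro h
      have h2 : (p:ℤ) ∣ -d := (dvd_neg).2 h
      have hpos : (0:ℝ) < ((-d : ℤ):ℝ) := by push_cast; linarith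
      have := Int.le_of_dvd (by exact_mod_cast hpos) h2
      have h4 : (p:ℝ) ≤ ((-d : ℤ):ℝ) := by exact_mod_cast this
      push_cast at h4
      linarith
    · intro h
      have e : ((b^2*c^2-4*c^3-4*b^3*d-27*d^2+18*b*c*d : ℤ) : ℝ) = ((x-y)*(y-z)*(z-x))^2 := by
        push_cast
        rw [hb, hc, hd]; ring
      have hpos : (0:ℝ) < ((b^2*c^2-4*c^3-4*b^3*d-27*d^2+18*b*c*d : ℤ) : ℝ) := by
        rw [e]; positivity
      have := Int.le_of_dvd (by exact_mod_cast hpos) h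
      have h4 : (p:ℝ) ≤ ((b^2*c^2-4*c^3-4*b^3*d-27*d^2+18*b*c*d : ℤ) : ℝ) := by exact_mod_cast this
      rw [e] at h4
      linarith
    · apply minpoly.isIntegrallyClosed_dvd hint
      have : μ^2 * (aeval θ q)^2 = -(δ:K) := by
        rw [← mul_pow, hX2', hmδ]; simp
      simp only [map_sub, map_mul, map_pow, aeval_X, aeval_C]
      simp only [algebraMap_int_eq, eq_intCast, Int.cast_natCast]
      linear_combination (aeval θ q)^2 * hθ - this
  · rw [hXs]
    exact mul_mem (by simpa using K1.algebraMap_mem t) hsK1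
  · rw [hX2', hmδ]; simp

end aux

/-- Lemma `lem:distinctmodp`. Let `K` be a sextic CM field with totally
real cubic subfield `K₊` and an imaginary quadratic subfield `K₁`, let `𝓞` be an order in
`K`, and let `μ ∈ 𝓞` with `K = ℚ(μ)` and `μ²` totally negative; set
`B = -(1/2)·Tr_{K/ℚ}(μ²)`. If `p` is a prime with `p > (1/4)·B^{15/2}`, then there exists
`δ ∈ ℤ_{>0}` coprime to `p` (indeed `p ∤ δ`) with `√(-δ) ∈ 𝓞 ∩ K₁`. -/
theorem stmt_3
    (K : Type*) [Field K] [NumberField K]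
    (hK6 : finrank ℚ K = 6)
    (hKcomplex : ∀ φ : K →+* ℂ, ∃ x : K, (φ x).im ≠ 0)
    (Kp : IntermediateField ℚ K)
    (hKp3 : finrank ℚ Kp = 3)
    (hKpreal : ∀ φ : K →+* ℂ, ∀ x ∈ Kp, (φ x).im = 0)
    (K1 : IntermediateField ℚ K)
    (hK12 : finrank ℚ K1 = 2)
    (hK1complex : ∀ ψ : K1 →+* ℂ, ∃ x : K1, (ψ x).im ≠ 0)
    (O : Subring K)
    (hOint : ∀ x ∈ O, IsIntegral ℤ x)
    (b : Basis (Fin 6) ℤ O)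
    (μ : K) (hμO : μ ∈ O)
    (hgen : IntermediateField.adjoin ℚ {μ} = ⊤)
    (hμ2neg : ∀ φ : K →+* ℂ, (φ (μ ^ 2)).im = 0 ∧ (φ (μ ^ 2)).re < 0)
    (p : ℕ) (hp : p.Prime)
    (hpbig : (p : ℝ) > (1/4) * ((-(1/2 : ℚ) * Algebra.trace ℚ K (μ ^ 2) : ℚ) : ℝ) ^
      ((15 : ℝ)/2)) :
    ∃ δ : ℕ, 0 < δ ∧ ¬ (p ∣ δ) ∧ ∃ x : K, x ∈ O ∧ x ∈ K1 ∧ x ^ 2 = -(δ : K) := by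
  obtain ⟨φ⟩ : Nonempty (K →+* ℂ) := inferInstance
  have hθpos : ∀ φ : K →+* ℂ, (φ (-μ^2)).im = 0 ∧ 0 < (φ (-μ^2)).re := by
    intro φ
    have h := hμ2neg φ
    rw [map_neg, Complex.neg_im, Complex.neg_re]
    exact ⟨by rw [h.1, neg_zero], by linarith [h.2]⟩
  obtain ⟨h3, hreal⟩ := aux_field K hK6 φ (hKcomplex φ) μ hgen (hθpos φ).1
  have hθO : -μ^2 ∈ O := neg_mem (pow_mem hμO 2)
  have hint : IsIntegral ℤ (-μ^2) := hOint _ hθO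
  obtain ⟨x, y, z, bb, c, d, hx, hy, hz, hne, hmin, hbb, hc, hd, htr⟩ :=
    aux_roots K hK6 (-μ^2) hint h3 hθpos
  obtain ⟨s, hsK1, hsre, hsim, r, hsr, hr⟩ := aux_K1 K φ K1 hK12 hK1complex
  exact aux_final K O hOint K1 φ μ hμO (hμ2neg φ) h3 hreal x y z bb c d hx hy hz hne hmin hbb hc hd
    s hsK1 hsre hsim r hsr hr p hp (by
      have e : ((-(1/2 : ℚ) * Algebra.trace ℚ K (μ ^ 2) : ℚ) : ℝ) = x + y + z := by
        rw [map_neg] at htr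
        push_cast at htr ⊢
        linarith
      rw [e] at hpbig
      exact hpbig)
end

section
/- Let K be a sextic CM field (a number field of degree 6 over ℚ, totally complex, containing a totally real subfield K₊ with [K₊:ℚ] = 3) containing no imaginary quadratic subfield (no subfield L with [L:ℚ] = 2). Let 𝓞 be an order in K, and let φ₁, φ₂, φ₃ : K → ℂ be embeddings that are pairwise non-conjugate (one representative from each conjugate pair of the six embeddings of K). Then for every real number R > (3/(4π))^{1/3}·|Δ(𝓞)|^{1/6}, there exists a nonzero γ ∈ 𝓞 such that K = ℚ(γ), |Re(φᵢ(γ))| < 1 for i = 1, 2, 3, and Im(φ₁(γ))² + Im(φ₂(γ))² + Im(φ₃(γ))² < R². -/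
open Module

theorem aux_odd (K : Type*) [Field K] [NumberField K]
    (hK6 : finrank ℚ K = 6)
    (hKcomplex : ∀ φ : K →+* ℂ, ∃ x : K, (φ x).im ≠ 0)
    (Kp : IntermediateField ℚ K)
    (hKp3 : finrank ℚ Kp = 3)
    (hKpreal : ∀ φ : K →+* ℂ, ∀ x ∈ Kp, (φ x).im = 0)
    (γ : K) (hodd : Odd (finrank ℚ (IntermediateField.adjoin ℚ {γ}))) (ψ : K →+* ℂ) :
    (ψ γ).im = 0 := by
  have : NumberField.IsTotallyReal Kp := by
    constructor
    intro v
    rw [← NumberField.InfinitePlace.mk_embedding v, NumberField.InfinitePlace.isReal_mk_iff,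
      NumberField.ComplexEmbedding.isReal_iff]
    ext x
    have h := hKpreal (NumberField.ComplexEmbedding.lift K v.embedding) x x.2
    have h2 := NumberField.ComplexEmbedding.lift_algebraMap_apply K v.embedding x
    rw [IntermediateField.algebraMap_apply] at h2
    rw [h2] at h
    simpa [NumberField.ComplexEmbedding.conjugate_coe_eq] using Complex.conj_eq_iff_im.2 h
  have : NumberField.IsTotallyComplex K := by
    constructor
    intro v
    rw [← NumberField.InfinitePlace.mk_embedding v, NumberField.InfinitePlace.isComplex_mk_iff,
      NumberField.ComplexEmbedding.isReal_iff]
    intro h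
    obtain ⟨x, hx⟩ := hKcomplex v.embedding
    apply hx
    have := RingHom.congr_fun h x
    rw [NumberField.ComplexEmbedding.conjugate_coe_eq] at this
    exact Complex.conj_eq_iff_im.1 this
  have : Algebra.IsQuadraticExtension Kp K := by
    constructor
    have := Module.finrank_mul_finrank ℚ Kp K
    rw [hKp3, hK6] at this
    omega
  have : NumberField.IsCMField K := NumberField.IsCMField.ofCMExtension Kp K
  set L := IntermediateField.adjoin ℚ {γ}
  have hpos := NumberField.InfinitePlace.nrRealPlaces_pos_of_odd_finrank hodd
  classical
  obtain ⟨⟨v, hv⟩⟩ := Fintype.card_pos_iff.1 hpos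
  rw [← NumberField.InfinitePlace.mk_embedding v, NumberField.InfinitePlace.isReal_mk_iff,
      NumberField.ComplexEmbedding.isReal_iff] at hv
  let g : L := ⟨γ, IntermediateField.mem_adjoin_simple_self ℚ γ⟩
  have h1 := RingHom.congr_fun hv g
  rw [NumberField.ComplexEmbedding.conjugate_coe_eq,
    ← NumberField.ComplexEmbedding.lift_algebraMap_apply K v.embedding g,
    IntermediateField.algebraMap_apply] at h1
  change (starRingEnd ℂ) (NumberField.ComplexEmbedding.lift K v.embedding γ) =
    NumberField.ComplexEmbedding.lift K v.embedding γ at h1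
  rw [← NumberField.IsCMField.complexEmbedding_complexConj] at h1
  have h2 := RingHom.injective _ h1
  rw [← Complex.conj_eq_iff_im, ← NumberField.IsCMField.complexEmbedding_complexConj, h2]

theorem aux_vol (R : ℝ) (hR : 0 < R) :
    MeasureTheory.volume {x : Fin 3 ⊕ Fin 3 → ℝ | (∀ i, |x (Sum.inl i)| < 1) ∧
      ∑ i, (x (Sum.inr i)) ^ 2 < R ^ 2} = ENNReal.ofReal (8 * (R ^ 3 * (Real.pi * 4 / 3))) := by
  have h1 := MeasureTheory.volume_measurePreserving_sumPiEquivProdPi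
    (fun _ : Fin 3 ⊕ Fin 3 => ℝ)
  have h2 := PiLp.volume_preserving_toLp (Fin 3)
  have hs : {x : Fin 3 ⊕ Fin 3 → ℝ | (∀ i, |x (Sum.inl i)| < 1) ∧
      ∑ i, (x (Sum.inr i)) ^ 2 < R ^ 2} =
      (MeasurableEquiv.sumPiEquivProdPi (fun _ : Fin 3 ⊕ Fin 3 => ℝ)) ⁻¹'
        ((Metric.ball (0 : Fin 3 → ℝ) 1) ×ˢ
          ((WithLp.toLp 2) ⁻¹' (Metric.ball (0 : EuclideanSpace ℝ (Fin 3)) R))) := by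
    ext x
    simp only [Set.mem_ofPred_eq, Set.mem_preimage, Set.mem_prod, Metric.mem_ball, dist_zero_right]
    rw [pi_norm_lt_iff one_pos, EuclideanSpace.norm_eq, Real.sqrt_lt' hR]
    simp [MeasurableEquiv.sumPiEquivProdPi, Equiv.sumPiEquivProdPi]
  rw [hs, h1.measure_preimage_equiv, MeasureTheory.Measure.volume_eq_prod,
    MeasureTheory.Measure.prod_prod, h2.measure_preimage
    (Metric.isOpen_ball.measurableSet.nullMeasurableSet), EuclideanSpace.volume_ball_fin_three,
    Real.volume_pi_ball _ one_pos, ← ENNReal.ofReal_pow hR.le,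
    ← ENNReal.ofReal_mul (by positivity), ← ENNReal.ofReal_mul (by positivity)]
  congr 1
  norm_num

theorem aux_convex (R : ℝ) (hR : 0 < R) :
    Convex ℝ {x : Fin 3 ⊕ Fin 3 → ℝ | (∀ i, |x (Sum.inl i)| < 1) ∧
      ∑ i, (x (Sum.inr i)) ^ 2 < R ^ 2} := by
  let T : (Fin 3 ⊕ Fin 3 → ℝ) →ₗ[ℝ] EuclideanSpace ℝ (Fin 3) :=
    (WithLp.linearEquiv 2 ℝ (Fin 3 → ℝ)).symm.toLinearMap ∘ₗ LinearMap.funLeft ℝ ℝ Sum.inr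
  let S : (Fin 3 ⊕ Fin 3 → ℝ) →ₗ[ℝ] (Fin 3 → ℝ) := LinearMap.funLeft ℝ ℝ Sum.inl
  have hs : {x : Fin 3 ⊕ Fin 3 → ℝ | (∀ i, |x (Sum.inl i)| < 1) ∧
      ∑ i, (x (Sum.inr i)) ^ 2 < R ^ 2} =
      S ⁻¹' (Metric.ball (0 : Fin 3 → ℝ) 1) ∩
          (T ⁻¹' (Metric.ball (0 : EuclideanSpace ℝ (Fin 3)) R)) := by
    ext x
    simp only [Set.mem_ofPred_eq, Set.mem_preimage, Set.mem_inter_iff, Metric.mem_ball,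
      dist_zero_right]
    rw [pi_norm_lt_iff one_pos, EuclideanSpace.norm_eq, Real.sqrt_lt' hR]
    simp [S, T, LinearMap.funLeft]
  rw [hs]
  exact ((convex_ball _ _).linear_preimage S).inter ((convex_ball _ _).linear_preimage T)

theorem aux_det (K : Type*) [Field K] [NumberField K]
    (b : Fin 3 ⊕ Fin 3 → K) (φ : Fin 3 → (K →+* ℂ))
    (e : Fin 3 ⊕ Fin 3 ≃ (K →ₐ[ℚ] ℂ))
    (he1 : ∀ i x, e (Sum.inl i) x = φ i x)
    (he2 : ∀ i x, e (Sum.inr i) x = (starRingEnd ℂ) (φ i x)) :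
    |((Algebra.discr ℚ b : ℚ) : ℝ)| = 64 * (Matrix.of (fun j : Fin 3 ⊕ Fin 3 =>
      (Sum.elim (fun i => (φ i (b j)).re) (fun i => (φ i (b j)).im) : Fin 3 ⊕ Fin 3 → ℝ))).det ^ 2 := by
  set A := (Matrix.of (fun j : Fin 3 ⊕ Fin 3 =>
      (Sum.elim (fun i => (φ i (b j)).re) (fun i => (φ i (b j)).im) : Fin 3 ⊕ Fin 3 → ℝ)))
  have h := Algebra.discr_eq_det_embeddingsMatrixReindex_pow_two ℚ ℂ b e
  let P : Matrix (Fin 3 ⊕ Fin 3) (Fin 3 ⊕ Fin 3) ℂ :=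
    Matrix.fromBlocks 1 1 (Complex.I • 1) (-Complex.I • 1)
  have hP : P.det = 8 * Complex.I := by
    simp only [P]
    rw [Matrix.det_fromBlocks_one₁₁, mul_one, ← sub_smul, Matrix.det_smul]
    have : Complex.I ^ 3 = - Complex.I := by simp [pow_succ]
    simp only [Fintype.card_fin, Matrix.det_one, mul_one]
    linear_combination (-8) * this
  have hN : Algebra.embeddingsMatrixReindex ℚ ℂ b e = A.map Complex.ofRealHom * P := by
    ext j s
    rw [Matrix.mul_apply, Fintype.sum_sum_type]
    rcases s with i | i
    · simp only [Algebra.embeddingsMatrixReindex, Algebra.embeddingsMatrix, Matrix.reindex_apply,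
        Matrix.submatrix_apply, Matrix.of_apply, P, A, Matrix.map_apply, Matrix.fromBlocks_apply₁₁,
        Matrix.fromBlocks_apply₂₁, Matrix.smul_apply, Matrix.one_apply]
      simp [he1]
    · simp only [Algebra.embeddingsMatrixReindex, Algebra.embeddingsMatrix, Matrix.reindex_apply,
        Matrix.submatrix_apply, Matrix.of_apply, P, A, Matrix.map_apply, Matrix.fromBlocks_apply₁₂,
        Matrix.fromBlocks_apply₂₂, Matrix.smul_apply, Matrix.one_apply]
      simp [he2, Complex.ext_iff]
  have hdet : (A.map Complex.ofRealHom).det = ((A.det : ℝ) : ℂ) := by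
    have := RingHom.map_det Complex.ofRealHom A
    simpa using this.symm
  rw [hN, Matrix.det_mul, hP, hdet] at h
  have h3 : ((Algebra.discr ℚ b : ℚ) : ℝ) = - (64 * A.det ^ 2) := by
    have h4 : (((Algebra.discr ℚ b : ℚ) : ℝ) : ℂ) = ((- (64 * A.det ^ 2) : ℝ) : ℂ) := by
      push_cast
      simp only [eq_ratCast] at h
      rw [h]
      linear_combination (64 * (A.det : ℂ) ^ 2) * Complex.I_sq
    exact_mod_cast h4
  rw [h3, abs_neg, abs_of_nonneg (by positivity)]

theorem aux_small (K : Type*) [Field K] [NumberField K] (γ : K) (hgInt : IsIntegral ℤ γ)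
    (hlt : ∀ ψ : K →ₐ[ℚ] ℂ, ‖ψ γ‖ < 1) : γ = 0 := by
  by_contra h0
  have hn := Algebra.norm_eq_prod_embeddings ℚ ℂ γ
  have hi : IsIntegral ℤ (Algebra.norm ℚ γ) := Algebra.isIntegral_norm ℚ hgInt
  obtain ⟨m, hm⟩ := IsIntegrallyClosed.isIntegral_iff.1 hi
  have hm0 : m ≠ 0 := by
    rintro rfl
    have : Algebra.norm ℚ γ = 0 := by simpa using hm.symm
    exact h0 (Algebra.norm_eq_zero_iff.1 this)
  rw [← hm] at hn
  have h1 : ‖((m : ℤ) : ℂ)‖ = ∏ σ : K →ₐ[ℚ] ℂ, ‖σ γ‖ := by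
    rw [← norm_prod, ← hn]; simp
  have h2 : ∏ σ : K →ₐ[ℚ] ℂ, ‖σ γ‖ < ∏ σ : K →ₐ[ℚ] ℂ, (1 : ℝ) := by
    apply Finset.prod_lt_prod_of_nonempty
    · intro σ _
      exact norm_pos_iff.2 (by simpa using h0)
    · intro σ _; exact hlt σ
    · exact ⟨(NumberField.ComplexEmbedding.lift K (algebraMap ℚ ℂ)).toRatAlgHom, Finset.mem_univ _⟩
  rw [← h1, Finset.prod_const_one, Complex.norm_intCast] at h2
  have h3 : |m| < 1 := by exact_mod_cast h2
  exact hm0 (Int.abs_lt_one_iff.1 h3)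

theorem aux_num (D d R : ℝ) (hD : D = 64 * d ^ 2)
    (hR : (3 / (4 * Real.pi)) ^ ((1 : ℝ)/3) * D ^ ((1 : ℝ)/6) < R) :
    0 < R ∧ |d| * 2 ^ 6 < 8 * (R ^ 3 * (Real.pi * 4 / 3)) := by
  have hD0 : 0 ≤ D := by rw [hD]; positivity
  have hpi := Real.pi_pos
  set u := (3 / (4 * Real.pi)) ^ ((1 : ℝ)/3) * D ^ ((1 : ℝ)/6) with hu
  have hu0 : 0 ≤ u := by positivity
  have hR0 : 0 < R := lt_of_le_of_lt hu0 hR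
  refine ⟨hR0, ?_⟩
  have h3 : u ^ 3 < R ^ 3 := pow_lt_pow_left₀ hR hu0 (by norm_num)
  have hu3 : u ^ 3 = 3 / (4 * Real.pi) * (8 * |d|) := by
    rw [hu, mul_pow, ← Real.rpow_natCast, ← Real.rpow_mul (by positivity),
      ← Real.rpow_natCast, ← Real.rpow_mul hD0]
    norm_num
    have : D = (8 * |d|) ^ 2 := by rw [hD, mul_pow, sq_abs]; norm_num
    rw [this, ← Real.rpow_natCast, ← Real.rpow_mul (by positivity)]
    norm_num
  rw [hu3] at h3
  have h4 : 8 * (3 / (4 * Real.pi) * (8 * |d|) * (Real.pi * 4 / 3)) = |d| * 2 ^ 6 := by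
    field_simp
    ring
  nlinarith [mul_lt_mul_of_pos_right h3 (show 0 < Real.pi * 4 / 3 by positivity)]

theorem stmt_4
    (K : Type*) [Field K] [NumberField K]
    (hK6 : finrank ℚ K = 6)
    (hKcomplex : ∀ φ : K →+* ℂ, ∃ x : K, (φ x).im ≠ 0)
    (Kp : IntermediateField ℚ K)
    (hKp3 : finrank ℚ Kp = 3)
    (hKpreal : ∀ φ : K →+* ℂ, ∀ x ∈ Kp, (φ x).im = 0)
    (hnoquad : ¬ ∃ L : IntermediateField ℚ K, finrank ℚ L = 2)
    (O : Subring K)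
    (hOint : ∀ x ∈ O, IsIntegral ℤ x)
    (b : Basis (Fin 6) ℤ O)
    (φ : Fin 3 → (K →+* ℂ))
    (hφ : ∀ i j : Fin 3, i ≠ j →
      φ i ≠ φ j ∧ φ i ≠ (starRingEnd ℂ).comp (φ j)) :
    ∀ R : ℝ,
      (3 / (4 * Real.pi)) ^ ((1 : ℝ)/3) *
          |((Algebra.discr ℚ (fun i => (b i : K)) : ℚ) : ℝ)| ^ ((1 : ℝ)/6) < R →
      ∃ γ : K, γ ≠ 0 ∧ γ ∈ O ∧ IntermediateField.adjoin ℚ {γ} = ⊤ ∧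
        (∀ i : Fin 3, |(φ i γ).re| < 1) ∧
        (∑ i : Fin 3, (φ i γ).im ^ 2) < R ^ 2 := by
  intro R hR
  classical
  -- the six embeddings
  let f : Fin 3 ⊕ Fin 3 → (K →ₐ[ℚ] ℂ) := Sum.elim (fun i => (φ i).toRatAlgHom)
    (fun i => ((starRingEnd ℂ).comp (φ i)).toRatAlgHom)
  have hf1 : ∀ i x, f (Sum.inl i) x = φ i x := fun i x => rfl
  have hf2 : ∀ i x, f (Sum.inr i) x = (starRingEnd ℂ) (φ i x) := fun i x => rfl
  have hself : ∀ i j, φ i ≠ (starRingEnd ℂ).comp (φ j) := by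
    intro i j
    by_cases hij : i = j
    · subst hij
      intro h
      obtain ⟨x, hx⟩ := hKcomplex (φ i)
      exact hx (Complex.conj_eq_iff_im.1 (RingHom.congr_fun h x).symm)
    · exact (hφ i j hij).2
  have hinj : Function.Injective f := by
    rintro (i | i) (j | j) h
    · by_contra hne
      refine (hφ i j (fun h => hne (by rw [h]))).1 (RingHom.ext fun x => ?_)
      rw [← hf1, ← hf1, h]
    · exact absurd (RingHom.ext fun x => by
        rw [RingHom.comp_apply, ← hf1, ← hf2, h]) (hself i j)
    · exact absurd (RingHom.ext fun x => by
        rw [RingHom.comp_apply, ← hf1, ← hf2, h]) (hself j i)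
    · by_contra hne
      refine (hφ i j (fun h => hne (by rw [h]))).1 (RingHom.ext fun x => ?_)
      apply (starRingEnd ℂ).injective
      rw [← hf2, ← hf2, h]
  have hbij : Function.Bijective f := by
    rw [Fintype.bijective_iff_injective_and_card]
    refine ⟨hinj, ?_⟩
    rw [AlgHom.card, hK6]; simp
  let e := Equiv.ofBijective f hbij
  -- the rational basis
  have hbZ : LinearIndependent ℤ (fun i => (b i : K)) :=
    b.linearIndependent.map' (O.subtype.toAddMonoidHom.toIntLinearMap)
      (LinearMap.ker_eq_bot.2 Subtype.val_injective)
  have hbQ : LinearIndependent ℚ (fun i => (b i : K)) :=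
    (LinearIndependent.iff_fractionRing ℤ ℚ).1 hbZ
  let bQ := basisOfLinearIndependentOfCardEqFinrank hbQ (by simp [hK6])
  have hbQc : ⇑bQ = fun i => (b i : K) := coe_basisOfLinearIndependentOfCardEqFinrank _ _
  let e0 : Fin 6 ≃ Fin 3 ⊕ Fin 3 := (finSumFinEquiv (m := 3) (n := 3)).symm
  let B : Fin 3 ⊕ Fin 3 → K := fun s => (b (e0.symm s) : K)
  have hdisc : Algebra.discr ℚ B = Algebra.discr ℚ (fun i => (b i : K)) := by
    have := Algebra.discr_reindex ℚ bQ e0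
    rw [hbQc] at this
    exact this
  have hdisc0 : Algebra.discr ℚ (fun i => (b i : K)) ≠ 0 := by
    rw [← hbQc]; exact Algebra.discr_not_zero_of_basis ℚ bQ
  have hdet := aux_det K B φ e hf1 hf2
  let ev : K → (Fin 3 ⊕ Fin 3 → ℝ) :=
    fun x => Sum.elim (fun i => (φ i x).re) (fun i => (φ i x).im)
  let evl : K →ₗ[ℤ] (Fin 3 ⊕ Fin 3 → ℝ) := AddMonoidHom.toIntLinearMap
    { toFun := ev
      map_zero' := by ext (i | i) <;> simp [ev]
      map_add' := fun x y => by ext (i | i) <;> simp [ev] }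
  have hevl : ∀ x, evl x = ev x := fun x => rfl
  change _ = 64 * (Matrix.of (fun j => ev (B j))).det ^ 2 at hdet
  rw [hdisc] at hdet
  obtain ⟨hR0, hvol⟩ := aux_num _ _ R hdet hR
  have hd0 : (Matrix.of (fun j => ev (B j))).det ≠ 0 := by
    intro h
    rw [h] at hdet
    simp [hdisc0] at hdet
  have hli : LinearIndependent ℝ (fun j => ev (B j)) :=
    Matrix.linearIndependent_rows_of_det_ne_zero hd0
  let V : Basis (Fin 3 ⊕ Fin 3) ℝ (Fin 3 ⊕ Fin 3 → ℝ) :=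
    basisOfLinearIndependentOfCardEqFinrank hli (by simp)
  have hV : ⇑V = fun j => ev (B j) := coe_basisOfLinearIndependentOfCardEqFinrank _ _
  have hfd := ZSpan.isAddFundamentalDomain V MeasureTheory.volume
  have hvfd := ZSpan.volume_fundamentalDomain V
  rw [hV] at hvfd
  have hcount : Countable (Submodule.span ℤ (Set.range V)).toAddSubgroup := by
    change Countable (Submodule.span ℤ (Set.range V))
    infer_instance
  obtain ⟨⟨x, hxL⟩, hx0, hxs⟩ :=
    MeasureTheory.exists_ne_zero_mem_lattice_of_measure_mul_two_pow_lt_measure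
    (L := (Submodule.span ℤ (Set.range V)).toAddSubgroup)
    (s := {x : Fin 3 ⊕ Fin 3 → ℝ | (∀ i, |x (Sum.inl i)| < 1) ∧
      ∑ i, (x (Sum.inr i)) ^ 2 < R ^ 2}) hfd
    (by rintro x ⟨h1, h2⟩; exact ⟨by simpa using h1, by simpa using h2⟩) (aux_convex R hR0) (by
      rw [hvfd, aux_vol R hR0]
      have h2 : (2 : ENNReal) ^ finrank ℝ (Fin 3 ⊕ Fin 3 → ℝ) = ENNReal.ofReal (2 ^ 6) := by
        rw [ENNReal.ofReal_pow (by norm_num)]; simp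
      rw [h2, ← ENNReal.ofReal_mul (abs_nonneg _)]
      exact (ENNReal.ofReal_lt_ofReal_iff_of_nonneg (by positivity)).2 hvol)
  have hxs' : (∀ i, |x (Sum.inl i)| < 1) ∧ ∑ i, (x (Sum.inr i)) ^ 2 < R ^ 2 := hxs
  have hx0' : x ≠ 0 := fun h => hx0 (Subtype.ext h)
  have hxm : x ∈ Submodule.map evl (Submodule.span ℤ (Set.range B)) := by
    rw [Submodule.map_span, ← Set.range_comp]
    have hxL' : x ∈ Submodule.span ℤ (Set.range V) := hxL
    rw [hV] at hxL'
    exact hxL'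
  obtain ⟨γ, hγB, hγx⟩ := hxm
  rw [hevl] at hγx
  subst hγx
  have hγO : γ ∈ O := by
    have : Submodule.span ℤ (Set.range B) ≤ AddSubgroup.toIntSubmodule O.toAddSubgroup := by
      rw [Submodule.span_le]
      rintro _ ⟨j, rfl⟩
      exact (b (e0.symm j)).2
    exact this hγB
  have hγ0 : γ ≠ 0 := by
    rintro rfl
    exact hx0' (map_zero evl)
  have hre : ∀ i, |(φ i γ).re| < 1 := hxs'.1
  refine ⟨γ, hγ0, hγO, ?_, hre, hxs'.2⟩
  have hdvd : finrank ℚ (IntermediateField.adjoin ℚ {γ}) ∣ 6 := by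
    rw [← hK6]
    exact ⟨_, (Module.finrank_mul_finrank ℚ (IntermediateField.adjoin ℚ {γ}) K).symm⟩
  have hne2 : finrank ℚ (IntermediateField.adjoin ℚ {γ}) ≠ 2 := fun h => hnoquad ⟨_, h⟩
  have hnodd : ¬ Odd (finrank ℚ (IntermediateField.adjoin ℚ {γ})) := by
    intro hodd
    have him := aux_odd K hK6 hKcomplex Kp hKp3 hKpreal γ hodd
    have hn : ∀ i, ‖φ i γ‖ < 1 := by
      intro i
      have h1 : φ i γ = (((φ i γ).re : ℝ) : ℂ) := Complex.ext rfl (by simp [him])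
      rw [h1, Complex.norm_real]
      exact hre i
    apply hγ0
    apply aux_small K γ (hOint γ hγO)
    intro ψ
    obtain ⟨s, rfl⟩ := hbij.2 ψ
    rcases s with i | i
    · rw [hf1]; exact hn i
    · rw [hf2, RCLike.norm_conj]; exact hn i
  have h6 : finrank ℚ (IntermediateField.adjoin ℚ {γ}) = 6 := by
    generalize finrank ℚ (IntermediateField.adjoin ℚ {γ}) = n at *
    have hle := Nat.le_of_dvd (by norm_num) hdvd
    interval_cases n <;> first | rfl | (exfalso; revert hdvd hne2 hnodd; decide)
  exact IntermediateField.eq_of_le_of_finrank_eq le_top (by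
    rw [h6, IntermediateField.finrank_top', hK6])
end

section
/- Let F be a totally real cubic number field (a number field with [F:ℚ] = 3 all of whose embeddings into ℂ have image in ℝ), with real embeddings σ₁, σ₂, σ₃ : F → ℝ, and let 𝓞 be an order in F with discriminant Δ(𝓞). Then for every real number R > |Δ(𝓞)|^{1/4}, there exists γ ∈ 𝓞 with γ ∉ ℚ such that |σ₁(γ)| < 1, |σ₂(γ)| < R and |σ₃(γ)| < R. -/
open Module

/-- Minkowski step, Case 2 of the geometry-of-numbers proposition.
Let `F` be a totally real cubic number field with (pairwise distinct) real embeddings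
`σ₁, σ₂, σ₃ : F → ℝ`, and let `𝓞` be an order in `F`. Then for every real
`R > |Δ(𝓞)|^{1/4}` there is `γ ∈ 𝓞` with `γ ∉ ℚ`, `|σ₁(γ)| < 1`, `|σ₂(γ)| < R`
and `|σ₃(γ)| < R`. -/
theorem stmt_5
    (F : Type*) [Field F] [NumberField F]
    (hF3 : finrank ℚ F = 3)
    (hFreal : ∀ φ : F →+* ℂ, ∀ x : F, (φ x).im = 0)
    (σ : Fin 3 → (F →+* ℝ))
    (hσ : Function.Injective σ)
    (O : Subring F)
    (hOint : ∀ x ∈ O, IsIntegral ℤ x)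
    (b : Basis (Fin 3) ℤ O) :
    ∀ R : ℝ,
      |((Algebra.discr ℚ (fun i => (b i : F)) : ℚ) : ℝ)| ^ ((1 : ℝ)/4) < R →
      ∃ γ ∈ O, γ ∉ Set.range (algebraMap ℚ F) ∧
        |σ 0 γ| < 1 ∧ |σ 1 γ| < R ∧ |σ 2 γ| < R := by
  classical
  intro R hR
  -- the three complex embeddings
  let τ : Fin 3 → (F →ₐ[ℚ] ℂ) := fun i => (Complex.ofRealHom.comp (σ i)).toRatAlgHom
  have hτ : Function.Injective τ := by
    intro i j hij
    apply hσ
    ext x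
    have := DFunLike.congr_fun hij x
    exact Complex.ofReal_injective this
  have hbij : Function.Bijective τ := by
    rw [Fintype.bijective_iff_injective_and_card]
    exact ⟨hτ, by rw [AlgHom.card, hF3]; simp⟩
  let e := Equiv.ofBijective τ hbij
  let M : Matrix (Fin 3) (Fin 3) ℝ := Matrix.of fun i j => σ j (b i : F)
  have hdisc : ((Algebra.discr ℚ (fun i => (b i : F)) : ℚ) : ℝ) = M.det ^ 2 := by
    have h := Algebra.discr_eq_det_embeddingsMatrixReindex_pow_two ℚ ℂ (fun i => (b i : F)) e
    have hM : Algebra.embeddingsMatrixReindex ℚ ℂ (fun i => (b i : F)) e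
        = Complex.ofRealHom.mapMatrix M := by
      ext i j
      rfl
    rw [hM, ← RingHom.map_det] at h
    apply Complex.ofReal_injective
    simpa using h
  have hliZ : LinearIndependent ℤ (fun i => (b i : F)) :=
    b.linearIndependent.map' (O.subtype.toAddMonoidHom.toIntLinearMap)
      (LinearMap.ker_eq_bot.2 Subtype.val_injective)
  have hliQ : LinearIndependent ℚ (fun i => (b i : F)) :=
    (LinearIndependent.iff_fractionRing ℤ ℚ).1 hliZ
  have hne : Algebra.discr ℚ (fun i => (b i : F)) ≠ 0 := by
    have := Algebra.discr_not_zero_of_basis ℚ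
      (basisOfLinearIndependentOfCardEqFinrank hliQ (by simp [hF3]))
    simpa using this
  have hdet : M.det ≠ 0 := by
    intro h0
    rw [h0] at hdisc
    apply hne
    have : ((Algebra.discr ℚ (fun i => (b i : F)) : ℚ) : ℝ) = 0 := by simpa using hdisc
    exact_mod_cast this
  have hliR : LinearIndependent ℝ M.row :=
    Matrix.linearIndependent_rows_iff_isUnit.2 ((Matrix.isUnit_iff_isUnit_det _).2 hdet.isUnit)
  let B : Basis (Fin 3) ℝ (Fin 3 → ℝ) :=
    basisOfLinearIndependentOfCardEqFinrank hliR (by simp)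
  have hB : ∀ i, B i = M.row i := fun i => by simp [B]
  have hR0 : 0 ≤ R := (Real.rpow_nonneg (abs_nonneg _) _).trans hR.le
  have hR2 : |M.det| < R ^ 2 := by
    rw [hdisc] at hR
    have h4 : |M.det ^ 2| < R ^ 4 := by
      have := pow_lt_pow_left₀ hR (Real.rpow_nonneg (abs_nonneg _) _) (n := 4) (by norm_num)
      rw [← Real.rpow_natCast, ← Real.rpow_mul (abs_nonneg _)] at this
      simpa using this
    rw [abs_pow] at h4
    refine lt_of_pow_lt_pow_left₀ 2 (by positivity) ?_
    calc |M.det| ^ 2 < R ^ 4 := h4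
      _ = (R ^ 2) ^ 2 := by ring
  let r : Fin 3 → ℝ := ![1, R, R]
  let S : Set (Fin 3 → ℝ) := Set.pi Set.univ fun i => Set.Ioo (-r i) (r i)
  have hvol : MeasureTheory.volume S = ENNReal.ofReal (R ^ 2 * 8) := by
    simp only [S]
    rw [Real.volume_pi_Ioo, ← ENNReal.ofReal_prod_of_nonneg]
    · congr 1
      simp [Fin.prod_univ_three, r]
      ring
    · intro i _
      fin_cases i <;> simp [r] <;> linarith
  have hfund := ZSpan.isAddFundamentalDomain' B MeasureTheory.volume
  have : Countable (Submodule.span ℤ (Set.range B)).toAddSubgroup := by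
    change Countable (Submodule.span ℤ (Set.range B))
    infer_instance
  obtain ⟨⟨x, hx⟩, hx0, hxS⟩ :=
    MeasureTheory.exists_ne_zero_mem_lattice_of_measure_mul_two_pow_lt_measure
    hfund (s := S) (by
      intro x hx i hi
      have := hx i hi
      simp only [Set.mem_Ioo, Pi.neg_apply] at this ⊢
      constructor <;> linarith [this.1, this.2])
    (convex_pi fun i _ => convex_Ioo _ _) (by
      rw [hvol, ZSpan.volume_fundamentalDomain]
      have : Matrix.of B = M := by
        ext i j
        simp [hB]
      rw [this, show ((2 : ENNReal) ^ finrank ℝ (Fin 3 → ℝ)) = ENNReal.ofReal 8 by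
        simp; norm_num, ← ENNReal.ofReal_mul (abs_nonneg _)]
      apply (ENNReal.ofReal_lt_ofReal_iff_of_nonneg (by positivity)).2
      linarith)
  rw [Submodule.mem_toAddSubgroup, Submodule.mem_span_range_iff_exists_fun] at hx
  obtain ⟨c, hc⟩ := hx
  let g : O := ∑ i, c i • b i
  have hg : ∀ j, σ j (g : F) = x j := by
    intro j
    rw [← hc]
    simp [g, hB, M]
  have hb : ∀ j, |σ j (g : F)| < r j := by
    intro j
    rw [hg, abs_lt]
    exact hxS j (Set.mem_univ j)
  have h0 : |σ 0 (g : F)| < 1 := hb 0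
  refine ⟨g, g.2, ?_, h0, hb 1, hb 2⟩
  rintro ⟨q, hq⟩
  have hqi : IsIntegral ℤ q := by
    have := hOint g g.2
    rw [← hq] at this
    exact (isIntegral_algebraMap_iff (algebraMap ℚ F).injective).1 this
  obtain ⟨n, hn⟩ := IsIntegrallyClosed.isIntegral_iff.1 hqi
  have hgn : (g : F) = (n : F) := by
    rw [← hq, ← hn]
    simp
  rw [hgn, map_intCast] at h0
  have hn0 : n = 0 := by
    have : |n| < 1 := by exact_mod_cast h0
    exact Int.abs_lt_one_iff.1 this
  apply hx0
  ext j
  change x j = 0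
  rw [← hg, hgn, hn0]
  simp
end

section
/- Let a, b, c be real numbers with a ≥ b ≥ c ≥ 0 and set B = a² + b² + c². Then 2⁶·a²·b²·c²·(a² − b²)⁴·(a² − c²)⁴·(b² − c²)⁴ ≤ (2¹⁸/3¹⁵)·B¹⁵. -/
theorem amgm3_aux (p q r : ℝ) (hp : 0 ≤ p) (hq : 0 ≤ q) (hr : 0 ≤ r) :
    p * q * r ≤ ((p + q + r) / 3) ^ 3 := by
  nlinarith [mul_nonneg hp (sq_nonneg (q - r)), mul_nonneg hq (sq_nonneg (p - r)),
    mul_nonneg hr (sq_nonneg (p - q)),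
    mul_nonneg (add_nonneg (add_nonneg hp hq) hr) (sq_nonneg (q - r)),
    mul_nonneg (add_nonneg (add_nonneg hp hq) hr) (sq_nonneg (p - r)),
    mul_nonneg (add_nonneg (add_nonneg hp hq) hr) (sq_nonneg (p - q))]

/-- inequality `eq:disc2`. For reals `a ≥ b ≥ c ≥ 0` and
`B = a² + b² + c²`, we have
`2⁶·a²b²c²·(a²−b²)⁴·(a²−c²)⁴·(b²−c²)⁴ ≤ (2¹⁸/3¹⁵)·B¹⁵`. -/
theorem stmt_8 (a b c : ℝ) (hab : a ≥ b) (hbc : b ≥ c) (hc : c ≥ 0) :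
    2 ^ 6 * a ^ 2 * b ^ 2 * c ^ 2 * (a ^ 2 - b ^ 2) ^ 4 * (a ^ 2 - c ^ 2) ^ 4 *
        (b ^ 2 - c ^ 2) ^ 4
      ≤ (2 ^ 18 / 3 ^ 15) * (a ^ 2 + b ^ 2 + c ^ 2) ^ 15 := by
  have hb : 0 ≤ b := le_trans hc hbc
  have h1 : b ^ 2 ≤ a ^ 2 := pow_le_pow_left₀ hb hab 2
  have h2 : c ^ 2 ≤ b ^ 2 := pow_le_pow_left₀ hc hbc 2
  have hz : 0 ≤ c ^ 2 := sq_nonneg c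
  generalize a ^ 2 = x at *
  generalize b ^ 2 = y at *
  generalize c ^ 2 = z at *
  have hxy : 0 ≤ x - y := by linarith
  have hyz : 0 ≤ y - z := by linarith
  have hxz : 0 ≤ x - z := by linarith
  have hy : 0 ≤ y := by linarith
  have hx : 0 ≤ x := by linarith
  have e1 := amgm3_aux x y z hx hy hz
  have e2 := amgm3_aux (x - y) (x - z) (y - z) hxy hxz hyz
  have e3 : (((x - y) + (x - z) + (y - z)) / 3) ^ 3 ≤ (2 * (x + y + z) / 3) ^ 3 :=
    pow_le_pow_left₀ (by linarith) (by linarith) 3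
  have e4 : ((x - y) * (x - z) * (y - z)) ^ 4 ≤ ((2 * (x + y + z) / 3) ^ 3) ^ 4 :=
    pow_le_pow_left₀ (by positivity) (e2.trans e3) 4
  have e5 := mul_le_mul e1 e4 (by positivity) (by positivity)
  calc _ = 2 ^ 6 * (x * y * z * ((x - y) * (x - z) * (y - z)) ^ 4) := by
        simp only [mul_pow]; ac_rfl
    _ ≤ 2 ^ 6 * (((x + y + z) / 3) ^ 3 * ((2 * (x + y + z) / 3) ^ 3) ^ 4) := by gcongr
    _ = _ := by
        generalize x + y + z = s
        ring
end

section
/- Let μ be an algebraic integer such that the field K = ℚ(μ) has degree 6 over ℚ and μ² is totally negative (φ(μ²) is a negative real for every embedding φ : K → ℂ). Set B = −(1/2)·Tr_{K/ℚ}(μ²). Then the absolute value of the discriminant of the power basis (1, μ, μ², μ³, μ⁴, μ⁵) of K over ℚ (equivalently, of the discriminant of the minimal polynomial of μ over ℚ) satisfies |Δ(ℤ[μ])| ≤ (2¹⁸/3¹⁵)·B¹⁵. -/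
open Module

lemma aux_sorted (x y z : ℝ) (hz : 0 < z) (hyz : z ≤ y) (hxy : y ≤ x) :
    ((x-y)*(x-z)*(y-z))^2 ≤ (8/27*(x+y+z)^3)^2 := by
  have h1 : (x-y)*(y-z) ≤ (x-z)^2/4 := by nlinarith [sq_nonneg ((x-y)-(y-z))]
  have h0 : 0 ≤ (x-y)*(y-z) := mul_nonneg (by linarith) (by linarith)
  have h2 : (x-z)^3 ≤ (x+y+z)^3 := pow_le_pow_left₀ (by linarith) (by linarith) 3
  have h3 : 0 ≤ (x-z)^3 := pow_nonneg (by linarith) 3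
  have h4 : (x-y)*(y-z)*(x-z) ≤ (x-z)^2/4*(x-z) :=
    mul_le_mul_of_nonneg_right h1 (by linarith)
  have h5 : 0 ≤ (x-y)*(y-z)*(x-z) := mul_nonneg h0 (by linarith)
  apply pow_le_pow_left₀
  · linarith
  · nlinarith

lemma aux_disc (x y z : ℝ) (hx : 0 < x) (hy : 0 < y) (hz : 0 < z) :
    ((x-y)*(x-z)*(y-z))^2 ≤ (8/27*(x+y+z)^3)^2 := by
  rcases le_total x y with h1 | h1 <;> rcases le_total y z with h2 | h2 <;>
    rcases le_total x z with h3 | h3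
  · have := aux_sorted z y x hx h1 h2; convert this using 1 <;> ring
  · have := aux_sorted z y x hx h1 h2; convert this using 1 <;> ring
  · have := aux_sorted y z x hx h3 h2; convert this using 1 <;> ring
  · have := aux_sorted y x z hz h3 h1; convert this using 1 <;> ring
  · have := aux_sorted z x y hy h1 h3; convert this using 1 <;> ring
  · have := aux_sorted x z y hy h2 h3; convert this using 1 <;> ring
  · have := aux_sorted x y z hz h2 h1; convert this using 1 <;> ring
  · have := aux_sorted x y z hz h2 h1; convert this using 1 <;> ring

lemma aux_amgm (x y z : ℝ) (hx : 0 < x) (hy : 0 < y) (hz : 0 < z) :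
    x*y*z ≤ (x+y+z)^3/27 := by
  nlinarith [mul_nonneg hx.le (sq_nonneg (y-z)), mul_nonneg hy.le (sq_nonneg (x-z)),
    mul_nonneg hz.le (sq_nonneg (x-y)), mul_nonneg hx.le (sq_nonneg (x-y)),
    mul_nonneg hx.le (sq_nonneg (x-z)), mul_nonneg hy.le (sq_nonneg (y-z)),
    mul_nonneg hy.le (sq_nonneg (x-y)), mul_nonneg hz.le (sq_nonneg (x-z)),
    mul_nonneg hz.le (sq_nonneg (y-z))]

lemma aux_main (x y z : ℝ) (hx : 0 < x) (hy : 0 < y) (hz : 0 < z) :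
    64*(x*y*z)*((x-y)*(x-z)*(y-z))^4 ≤ 2^18/3^15*(x+y+z)^15 := by
  have h1 := aux_amgm x y z hx hy hz
  have h2 : (((x-y)*(x-z)*(y-z))^2)^2 ≤ ((8/27*(x+y+z)^3)^2)^2 :=
    pow_le_pow_left₀ (sq_nonneg _) (aux_disc x y z hx hy hz) 2
  have h3 := mul_le_mul h1 h2 (sq_nonneg _) (by positivity)
  calc 64*(x*y*z)*((x-y)*(x-z)*(y-z))^4
      = 64*(x*y*z*(((x-y)*(x-z)*(y-z))^2)^2) := by ring
    _ ≤ 64*((x+y+z)^3/27*((8/27*(x+y+z)^3)^2)^2) := by linarith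
    _ = _ := by ring

/-- A six-element set of nonzero reals closed under negation is `{±a, ±b, ±c}`. -/
lemma aux_set (T : Finset ℝ) (hc : T.card = 6) (h0 : (0:ℝ) ∉ T) (hn : ∀ t ∈ T, -t ∈ T) :
    ∃ a b c : ℝ, 0 < a ∧ 0 < b ∧ 0 < c ∧ a ≠ b ∧ a ≠ c ∧ b ≠ c ∧ a ∈ T ∧ b ∈ T ∧ c ∈ T := by
  classical
  have h1 := Finset.card_filter_add_card_filter_not (s := T) (fun t => 0 < t)
  have h2 : (T.filter (fun t => ¬ 0 < t)).card = (T.filter (fun t => 0 < t)).card := by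
    apply Finset.card_bij (fun t _ => -t)
    · intro t ht
      simp only [Finset.mem_filter, not_lt] at ht ⊢
      refine ⟨hn t ht.1, ?_⟩
      have : t ≠ 0 := fun h => h0 (h ▸ ht.1)
      have := lt_of_le_of_ne ht.2 this
      linarith
    · intro s _ t _ h
      exact neg_injective h
    · intro t ht
      simp only [Finset.mem_filter, not_lt] at ht ⊢
      exact ⟨-t, ⟨hn t ht.1, by linarith [ht.2]⟩, neg_neg t⟩
  have h3 : (T.filter (fun t => 0 < t)).card = 3 := by omega
  obtain ⟨a, b, c, hab, hac, hbc, h⟩ := Finset.card_eq_three.mp h3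
  have ha : a ∈ T.filter (fun t => 0 < t) := by rw [h]; simp
  have hb : b ∈ T.filter (fun t => 0 < t) := by rw [h]; simp
  have hcc : c ∈ T.filter (fun t => 0 < t) := by rw [h]; simp
  simp only [Finset.mem_filter] at ha hb hcc
  exact ⟨a, b, c, ha.2, hb.2, hcc.2, hab, hac, hbc, ha.1, hb.1, hcc.1⟩

/-- Let `μ` be an algebraic integer such that `K = ℚ(μ)` has degree 6
over `ℚ` and `μ²` is totally negative, and set `B = -(1/2)·Tr_{K/ℚ}(μ²)`. Then the
absolute value of the discriminant of the power basis `(1, μ, …, μ⁵)` of `K/ℚ` is at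
most `(2¹⁸/3¹⁵)·B¹⁵`. -/
theorem stmt_9
    (K : Type*) [Field K] [NumberField K]
    (hK6 : finrank ℚ K = 6)
    (μ : K)
    (hμint : IsIntegral ℤ μ)
    (hgen : IntermediateField.adjoin ℚ {μ} = ⊤)
    (hμ2neg : ∀ φ : K →+* ℂ, (φ (μ ^ 2)).im = 0 ∧ (φ (μ ^ 2)).re < 0) :
    |Algebra.discr ℚ (fun i : Fin 6 => μ ^ (i : ℕ))| ≤
      (2 ^ 18 / 3 ^ 15 : ℚ) * (-(1/2 : ℚ) * Algebra.trace ℚ K (μ ^ 2)) ^ 15 := by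
  classical
  have hcard : Fintype.card (K →ₐ[ℚ] ℂ) = 6 := by
    rw [AlgHom.card ℚ K ℂ, hK6]
  have him : ∀ φ : K →ₐ[ℚ] ℂ, φ μ = ((φ μ).im : ℂ) * Complex.I ∧ (φ μ).im ≠ 0 := by
    intro φ
    obtain ⟨h1, h2⟩ := hμ2neg (φ : K →+* ℂ)
    simp only [RingHom.coe_coe, map_mul, pow_two, Complex.mul_im, Complex.mul_re] at h1 h2
    have hne : (φ μ).im ≠ 0 := by
      intro h
      rw [h] at h2
      nlinarith [mul_self_nonneg (φ μ).re]
    have hre : (φ μ).re = 0 := by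
      have : (φ μ).re * (φ μ).im = 0 := by linarith
      exact (mul_eq_zero.mp this).resolve_right hne
    refine ⟨?_, hne⟩
    apply Complex.ext <;> simp [hre]
  have hinj : Function.Injective (fun φ : K →ₐ[ℚ] ℂ => (φ μ).im) := by
    intro φ ψ h
    have h' : φ μ = ψ μ := by
      rw [(him φ).1, (him ψ).1]
      simp only at h
      rw [h]
    have hle : IntermediateField.adjoin ℚ {μ} ≤
        IntermediateField.mk (AlgHom.equalizer φ ψ) (by
          intro x hx
          have hx' : φ x = ψ x := hx
          change φ x⁻¹ = ψ x⁻¹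
          rw [map_inv₀, map_inv₀, hx']) := by
      rw [IntermediateField.adjoin_le_iff]
      intro x hx
      rw [Set.mem_singleton_iff] at hx
      subst hx
      exact h'
    rw [hgen] at hle
    ext x
    exact hle (IntermediateField.mem_top (x := x))
  obtain ⟨a, b, c, ha, hb, hc, hab, hac, hbc, haT, hbT, hcT⟩ :=
    aux_set (Finset.univ.image (fun φ : K →ₐ[ℚ] ℂ => (φ μ).im))
      (by rw [Finset.card_image_of_injective _ hinj, Finset.card_univ, hcard])
      (by
        simp only [Finset.mem_image, Finset.mem_univ, true_and, not_exists]
        exact fun φ => (him φ).2)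
      (by
        intro t ht
        simp only [Finset.mem_image, Finset.mem_univ, true_and] at ht ⊢
        obtain ⟨φ, rfl⟩ := ht
        exact ⟨(Complex.conjAe.toAlgHom.restrictScalars ℚ).comp φ, by simp⟩)
  simp only [Finset.mem_image, Finset.mem_univ, true_and] at haT hbT hcT
  have hneg : ∀ φ : K →ₐ[ℚ] ℂ, ∃ ψ : K →ₐ[ℚ] ℂ, (ψ μ).im = -(φ μ).im := fun φ =>
    ⟨(Complex.conjAe.toAlgHom.restrictScalars ℚ).comp φ, by simp⟩
  obtain ⟨φa, hφa⟩ := haT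
  obtain ⟨φb, hφb⟩ := hbT
  obtain ⟨φc, hφc⟩ := hcT
  obtain ⟨ψa, hψa⟩ := hneg φa
  obtain ⟨ψb, hψb⟩ := hneg φb
  obtain ⟨ψc, hψc⟩ := hneg φc
  rw [hφa] at hψa
  rw [hφb] at hψb
  rw [hφc] at hψc
  let f : Fin 6 → (K →ₐ[ℚ] ℂ) := ![φa, φb, φc, ψa, ψb, ψc]
  have hfv : ∀ i, (f i μ).im = (![a, b, c, -a, -b, -c] : Fin 6 → ℝ) i := by
    intro i
    fin_cases i <;> simp [f, hφa, hφb, hφc, hψa, hψb, hψc]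
  have hfinj : Function.Injective f := by
    intro i j hij
    have h := hfv i
    rw [hij, hfv j] at h
    fin_cases i <;> fin_cases j <;> first | rfl | (exfalso; simp at h; first | (exact hab (by linarith)) | (exact hac (by linarith)) | (exact hbc (by linarith)) | linarith)
  have hfbij : Function.Bijective f :=
    (Fintype.bijective_iff_injective_and_card f).mpr ⟨hfinj, by simp [hcard]⟩
  let e : Fin 6 ≃ (K →ₐ[ℚ] ℂ) := Equiv.ofBijective f hfbij
  have hev : ∀ i, e i μ = (((![a, b, c, -a, -b, -c] : Fin 6 → ℝ) i : ℝ) : ℂ) * Complex.I := by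
    intro i
    rw [← hfv i]
    exact (him (f i)).1
  have htr : ((Algebra.trace ℚ K (μ ^ 2) : ℚ) : ℝ) = -2 * (a^2 + b^2 + c^2) := by
    have h := trace_eq_sum_embeddings (K := ℚ) (L := K) ℂ (x := μ ^ 2)
    rw [← e.sum_comp] at h
    simp only [map_pow, hev, Fin.sum_univ_six, mul_pow, Complex.I_sq] at h
    simp at h
    have h' : (((Algebra.trace ℚ K (μ ^ 2) : ℚ) : ℝ) : ℂ) =
        ((-2 * (a^2 + b^2 + c^2) : ℝ) : ℂ) := by
      push_cast
      rw [h]; ring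
    exact_mod_cast h'
  have hd : ((Algebra.discr ℚ (fun i : Fin 6 => μ ^ (i : ℕ)) : ℚ) : ℝ) =
      -(64*(a^2*b^2*c^2)*((a^2-b^2)*(a^2-c^2)*(b^2-c^2))^4) := by
    have h := Algebra.discr_eq_det_embeddingsMatrixReindex_pow_two ℚ ℂ
      (fun i : Fin 6 => μ ^ (i : ℕ)) e
    have hm : Algebra.embeddingsMatrixReindex ℚ ℂ (fun i : Fin 6 => μ ^ (i : ℕ)) e =
        (Matrix.vandermonde (fun i => e i μ)).transpose := by
      ext i j
      simp [Algebra.embeddingsMatrixReindex, Algebra.embeddingsMatrix, Matrix.vandermonde]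
    have hfac : ∀ x y : ℂ, x * Complex.I - y * Complex.I = (x - y) * Complex.I := by
      intro x y; ring
    have hI : Complex.I ^ 30 = -1 := by
      rw [show 30 = 2 * 15 from rfl, pow_mul, Complex.I_sq]; norm_num
    rw [hm, Matrix.det_transpose, Matrix.det_vandermonde] at h
    have hprod : ∀ g : Fin 6 → ℂ, ∏ i, ∏ j ∈ Finset.Ioi i, (g j - g i) =
        (g 1 - g 0) * (g 2 - g 0) * (g 3 - g 0) * (g 4 - g 0) * (g 5 - g 0) *
        ((g 2 - g 1) * (g 3 - g 1) * (g 4 - g 1) * (g 5 - g 1)) *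
        ((g 3 - g 2) * (g 4 - g 2) * (g 5 - g 2)) *
        ((g 4 - g 3) * (g 5 - g 3)) * (g 5 - g 4) := by
      intro g
      rw [Fin.prod_univ_six,
        show Finset.Ioi (0 : Fin 6) = {1,2,3,4,5} by decide,
        show Finset.Ioi (1 : Fin 6) = {2,3,4,5} by decide,
        show Finset.Ioi (2 : Fin 6) = {3,4,5} by decide,
        show Finset.Ioi (3 : Fin 6) = {4,5} by decide,
        show Finset.Ioi (4 : Fin 6) = {5} by decide,
        show Finset.Ioi (5 : Fin 6) = ∅ by decide]
      repeat rw [Finset.prod_insert (by decide)]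
      simp only [Finset.prod_singleton, Finset.prod_empty]
      ring
    rw [hprod] at h
    simp only [hev, hfac] at h
    simp at h
    have h' : (((Algebra.discr ℚ (fun i : Fin 6 => μ ^ (i : ℕ)) : ℚ) : ℝ) : ℂ) =
        ((-(64*(a^2*b^2*c^2)*((a^2-b^2)*(a^2-c^2)*(b^2-c^2))^4) : ℝ) : ℂ) := by
      push_cast
      rw [h]
      calc _ = Complex.I ^ 30 * (64*((a:ℂ)^2*b^2*c^2)*((a^2-b^2)*(a^2-c^2)*(b^2-c^2))^4) := by
            generalize Complex.I = I
            ring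
        _ = _ := by rw [hI]; ring
    exact_mod_cast h'
  have hfin := aux_main (a^2) (b^2) (c^2) (by positivity) (by positivity) (by positivity)
  have hR : |((Algebra.discr ℚ (fun i : Fin 6 => μ ^ (i : ℕ)) : ℚ) : ℝ)| ≤
      (2 ^ 18 / 3 ^ 15 : ℝ) * (-(1/2 : ℝ) * ((Algebra.trace ℚ K (μ ^ 2) : ℚ) : ℝ)) ^ 15 := by
    rw [hd, htr, abs_neg, abs_of_nonneg]
    · convert hfin using 2
      ring
    · have : 0 ≤ ((a^2-b^2)*(a^2-c^2)*(b^2-c^2))^4 := Even.pow_nonneg (by decide) _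
      positivity
  have hcast : ((|Algebra.discr ℚ (fun i : Fin 6 => μ ^ (i : ℕ))| : ℚ) : ℝ) ≤
      (((2 ^ 18 / 3 ^ 15 : ℚ) * (-(1/2 : ℚ) * Algebra.trace ℚ K (μ ^ 2)) ^ 15 : ℚ) : ℝ) := by
    push_cast
    exact hR
  exact Rat.cast_le.mp hcast
end

section
/- Let c₁, c₂ be negative rational numbers and let 𝓑 = ℍ[ℚ, c₁, c₂] be the corresponding (definite) quaternion algebra over ℚ, with conjugation star, reduced trace Tr(q) = q + star q and reduced norm N(q) = q · star q (both scalars, identified with rationals). Let x, β, c, d ∈ 𝓑 and let α, γ, n be positive integers such that: star x = −x, star β = −β, star d = −d, n = α·γ − N(β), and n·γ = −(α·c + β·d) in 𝓑. Define B ∈ ℚ by B = −(1/2)·(Tr(x²) − 4α + (2/n)·Tr(c) + (1/n²)·Tr(d²)). Then B = N(x) + 2α + γ/α + n/α² + N(β/α + (star d)/n). Consequently, N(x) ≤ B, 2α ≤ B, γ/α ≤ B, N(β) ≤ α²·B, N(d) ≤ 2B·n², n ≤ (1/4)·B³ and N(d) ≤ (1/8)·B⁷. -/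
open Quaternion

/-- The reduced trace of a quaternion `q`, i.e. the scalar `q + star q`
identified with a rational number. -/
def quatTr {c₁ c₂ : ℚ} (q : ℍ[ℚ, c₁, c₂]) : ℚ := (q + star q).re

/-- The reduced norm of a quaternion `q`, i.e. the scalar `q * star q`
identified with a rational number. -/
def quatN {c₁ c₂ : ℚ} (q : ℍ[ℚ, c₁, c₂]) : ℚ := (q * star q).re

theorem quatN_eq {c₁ c₂ : ℚ} (q : ℍ[ℚ, c₁, c₂]) :
    quatN q = q.re ^ 2 - c₁ * q.imI ^ 2 - c₂ * q.imJ ^ 2 + c₁ * c₂ * q.imK ^ 2 := by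
  simp [quatN]
  ring

theorem quatTr_eq {c₁ c₂ : ℚ} (q : ℍ[ℚ, c₁, c₂]) : quatTr q = 2 * q.re := by
  simp [quatTr]
  ring

theorem quatN_nonneg {c₁ c₂ : ℚ} (hc₁ : c₁ < 0) (hc₂ : c₂ < 0) (q : ℍ[ℚ, c₁, c₂]) :
    0 ≤ quatN q := by
  rw [quatN_eq]
  have h1 := mul_nonneg (neg_nonneg.2 hc₁.le) (sq_nonneg q.imI)
  have h2 := mul_nonneg (neg_nonneg.2 hc₂.le) (sq_nonneg q.imJ)
  have h3 := mul_nonneg (mul_nonneg_of_nonpos_of_nonpos hc₁.le hc₂.le) (sq_nonneg q.imK)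
  nlinarith [sq_nonneg q.re]

theorem re_zero_of_star {c₁ c₂ : ℚ} {q : ℍ[ℚ, c₁, c₂]} (h : star q = -q) : q.re = 0 := by
  have := congrArg QuaternionAlgebra.re h
  simp at this
  linarith

/-- the computation of Section 4: equation `eq:trace` and the bounds
following it. In a definite quaternion algebra `𝓑 = ℍ[ℚ, c₁, c₂]` (`c₁, c₂ < 0`), given
`x, β, c, d ∈ 𝓑` and positive integers `α, γ, n` with `star x = -x`, `star β = -β`,
`star d = -d`, `n = αγ - N(β)` and `nγ = -(αc + βd)`, the quantity
`B = -(1/2)·(Tr(x²) - 4α + (2/n)·Tr(c) + (1/n²)·Tr(d²))` satisfies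
`B = N(x) + 2α + γ/α + n/α² + N(β/α + d^∨/n)`, and consequently
`N(x) ≤ B`, `2α ≤ B`, `γ/α ≤ B`, `N(β) ≤ α²B`, `N(d) ≤ 2Bn²`, `n ≤ B³/4`,
`N(d) ≤ B⁷/8`. -/
theorem stmt_12 (c₁ c₂ : ℚ) (hc₁ : c₁ < 0) (hc₂ : c₂ < 0)
    (x β c d : ℍ[ℚ, c₁, c₂]) (α γ n : ℤ)
    (hα : 0 < α) (hγ : 0 < γ) (hn : 0 < n)
    (hx : star x = -x) (hβ : star β = -β) (hd : star d = -d)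
    (hnval : (n : ℚ) = (α : ℚ) * (γ : ℚ) - quatN β)
    (hrel : (algebraMap ℚ ℍ[ℚ, c₁, c₂]) ((n : ℚ) * (γ : ℚ)) =
      -((algebraMap ℚ ℍ[ℚ, c₁, c₂]) (α : ℚ) * c + β * d))
    (B : ℚ)
    (hB : B = -(1/2) * (quatTr (x ^ 2) - 4 * (α : ℚ) + (2 / (n : ℚ)) * quatTr c +
      (1 / (n : ℚ) ^ 2) * quatTr (d ^ 2))) :
    B = quatN x + 2 * (α : ℚ) + (γ : ℚ) / (α : ℚ) + (n : ℚ) / (α : ℚ) ^ 2 +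
        quatN (((α : ℚ)⁻¹) • β + ((n : ℚ)⁻¹) • star d) ∧
      quatN x ≤ B ∧
      2 * (α : ℚ) ≤ B ∧
      (γ : ℚ) / (α : ℚ) ≤ B ∧
      quatN β ≤ (α : ℚ) ^ 2 * B ∧
      quatN d ≤ 2 * B * (n : ℚ) ^ 2 ∧
      (n : ℚ) ≤ (1/4) * B ^ 3 ∧
      quatN d ≤ (1/8) * B ^ 7 := by
  have hx0 := re_zero_of_star hx
  have hβ0 := re_zero_of_star hβ
  have hd0 := re_zero_of_star hd
  have ha : (0 : ℚ) < α := by exact_mod_cast hα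
  have hg : (0 : ℚ) < γ := by exact_mod_cast hγ
  have hm : (0 : ℚ) < n := by exact_mod_cast hn
  have hNx := quatN_nonneg hc₁ hc₂ x
  have hNβ := quatN_nonneg hc₁ hc₂ β
  have hNu := quatN_nonneg hc₁ hc₂ (((α : ℚ)⁻¹) • β + ((n : ℚ)⁻¹) • star d)
  have hre := congrArg QuaternionAlgebra.re hrel
  simp only [QuaternionAlgebra.algebraMap_eq, QuaternionAlgebra.re_neg,
    QuaternionAlgebra.re_add, QuaternionAlgebra.re_mul] at hre
  -- the polar pairing of `β` and `d`
  obtain ⟨P, hP⟩ : ∃ P : ℚ, P = - c₁ * β.imI * d.imI - c₂ * β.imJ * d.imJ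
      + c₁ * c₂ * β.imK * d.imK := ⟨_, rfl⟩
  have hc0 : c.re = (P - n * γ) / α := by
    rw [eq_div_iff ha.ne', hP]
    simp only [hβ0] at hre
    linarith
  have hu : quatN (((α : ℚ)⁻¹) • β + ((n : ℚ)⁻¹) • star d)
      = quatN β / α ^ 2 - 2 * P / (α * n) + quatN d / n ^ 2 := by
    rw [hd, hP]
    simp only [quatN_eq, QuaternionAlgebra.re_add, QuaternionAlgebra.imI_add,
      QuaternionAlgebra.imJ_add, QuaternionAlgebra.imK_add, QuaternionAlgebra.re_smul,
      QuaternionAlgebra.imI_smul, QuaternionAlgebra.imJ_smul, QuaternionAlgebra.imK_smul,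
      QuaternionAlgebra.re_neg, QuaternionAlgebra.imI_neg, QuaternionAlgebra.imJ_neg,
      QuaternionAlgebra.imK_neg, hβ0, hd0, smul_eq_mul]
    field_simp
    ring
  have hsq : ∀ q : ℍ[ℚ, c₁, c₂], q.re = 0 → quatTr (q ^ 2) = -2 * quatN q := by
    intro q hq
    rw [quatTr_eq, quatN_eq, pow_two]
    simp [hq]
    ring
  -- parallelogram law
  have hpar : quatN d / n ^ 2 ≤ 2 * (quatN β / α ^ 2)
      + 2 * quatN (((α : ℚ)⁻¹) • β + ((n : ℚ)⁻¹) • star d) := by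
    have h := quatN_nonneg hc₁ hc₂ ((2 * (α : ℚ)⁻¹) • β + ((n : ℚ)⁻¹) • star d)
    have h2 : quatN ((2 * (α : ℚ)⁻¹) • β + ((n : ℚ)⁻¹) • star d)
        = 4 * (quatN β / α ^ 2) - 4 * P / (α * n) + quatN d / n ^ 2 := by
      rw [hd, hP]
      simp only [quatN_eq, QuaternionAlgebra.re_add, QuaternionAlgebra.imI_add,
        QuaternionAlgebra.imJ_add, QuaternionAlgebra.imK_add, QuaternionAlgebra.re_smul,
        QuaternionAlgebra.imI_smul, QuaternionAlgebra.imJ_smul, QuaternionAlgebra.imK_smul,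
        QuaternionAlgebra.re_neg, QuaternionAlgebra.imI_neg, QuaternionAlgebra.imJ_neg,
        QuaternionAlgebra.imK_neg, hβ0, hd0, smul_eq_mul]
      field_simp
      ring
    rw [h2] at h
    rw [hu]
    have e : 4 * P / ((α : ℚ) * n) = 2 * (2 * P / (α * n)) := by ring
    linarith
  have hNβ' : quatN β = α * γ - n := by linarith
  have main : B = quatN x + 2 * (α : ℚ) + (γ : ℚ) / (α : ℚ) + (n : ℚ) / (α : ℚ) ^ 2 +
        quatN (((α : ℚ)⁻¹) • β + ((n : ℚ)⁻¹) • star d) := by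
    rw [hu, hB, hsq x hx0, hsq d hd0, quatTr_eq c, hc0, hNβ']
    field_simp
    ring
  generalize quatN (((α : ℚ)⁻¹) • β + ((n : ℚ)⁻¹) • star d) = U at *
  have hga : (0 : ℚ) < γ / α := div_pos hg ha
  have hna : (0 : ℚ) < n / (α : ℚ) ^ 2 := by positivity
  have hβa : quatN β / (α : ℚ) ^ 2 = γ / α - n / (α : ℚ) ^ 2 := by
    rw [hNβ']
    field_simp
  have h2a : 2 * (α : ℚ) ≤ B := by linarith
  have hgB : (γ : ℚ) / α ≤ B := by linarith
  have hB0 : 0 < B := by linarith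
  have hdB : quatN d ≤ 2 * B * (n : ℚ) ^ 2 := by
    rw [← div_le_iff₀ (by positivity)]
    linarith
  have hag : (α : ℚ) * γ = α ^ 2 * (γ / α) := by
    field_simp
  have hnB : (n : ℚ) ≤ (1/4) * B ^ 3 := by
    calc (n : ℚ) ≤ α ^ 2 * (γ / α) := by linarith
      _ ≤ (B / 2) ^ 2 * B := by
        gcongr
        linarith
      _ = (1/4) * B ^ 3 := by ring
  refine ⟨main, by linarith, h2a, hgB, ?_, hdB, hnB, ?_⟩
  · calc quatN β ≤ α ^ 2 * (γ / α) := by linarith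
      _ ≤ α ^ 2 * B := by gcongr
  · calc quatN d ≤ 2 * B * (n : ℚ) ^ 2 := hdB
      _ ≤ 2 * B * ((1/4) * B ^ 3) ^ 2 := by gcongr
      _ = (1/8) * B ^ 7 := by ring
end
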